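/- arXiv:1810.06680 — 3 statements merged into one kernel-verified Lean document; each statement's English description precedes it below -/
import Mathlib

section
/- (Main theorem on I_α, first weight condition) Let 0<α<mn and q = n/(mn−α). Let u_1,…,u_m and v be weights on ℝ^n, write u⃗^{mq} = (u_1^{mq},…,u_m^{mq}) and ν = ∏_{i=1}^m u_i^q. Suppose u⃗^{mq} ∈ A_{(1,…,1)} and ν v^q ∈ A_∞. Then there exists a constant C such that for all f_1,…,f_m, ‖I_α(f⃗)/v‖_{L^{q,∞}(ν v^q)} ≤ C ∏_{i=1}^m ‖f_i‖_{L^1(u_i)}. -/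
open MeasureTheory ENNReal Set

noncomputable section

/-- Euclidean space `ℝ^n`. -/
abbrev ESp (n : ℕ) := EuclideanSpace ℝ (Fin n)

/-- An axis-parallel cube with positive finite side length. -/
def IsCube {n : ℕ} (Q : Set (ESp n)) : Prop :=
  ∃ (c : Fin n → ℝ) (h : ℝ), 0 < h ∧ Q = {x : ESp n | ∀ i, c i ≤ x i ∧ x i ≤ c i + h}

/-- The measure `w(E) = ∫_E w` associated to a weight `w`. -/
def wMeas {n : ℕ} (w : ESp n → ℝ) (E : Set (ESp n)) : ℝ≥0∞ :=
  ∫⁻ x in E, ENNReal.ofReal (w x)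

/-- A weight: a nonnegative locally integrable function, positive (and finite) a.e. -/
def IsWeight {n : ℕ} (w : ESp n → ℝ) : Prop :=
  Measurable w ∧ (∀ x, 0 ≤ w x) ∧ (∀ᵐ x ∂(volume : Measure (ESp n)), 0 < w x) ∧
    ∀ Q : Set (ESp n), IsCube Q → wMeas w Q < ⊤

/-- `C` is an admissible `A₁` constant for `w`. -/
def A1Const {n : ℕ} (w : ESp n → ℝ) (C : ℝ≥0∞) : Prop :=
  ∀ Q : Set (ESp n), IsCube Q →
    (volume Q)⁻¹ * wMeas w Q ≤ C * essInf (fun x => ENNReal.ofReal (w x)) (volume.restrict Q)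

/-- The Muckenhoupt class `A₁`. -/
def IsA1 {n : ℕ} (w : ESp n → ℝ) : Prop := ∃ C : ℝ≥0∞, C < ⊤ ∧ A1Const w C

/-- The Muckenhoupt class `A_p`, `1 < p < ∞`. -/
def IsAp {n : ℕ} (w : ESp n → ℝ) (p : ℝ) : Prop :=
  ∃ C : ℝ≥0∞, C < ⊤ ∧ ∀ Q : Set (ESp n), IsCube Q →
    ((volume Q)⁻¹ * wMeas w Q) *
      ((volume Q)⁻¹ * ∫⁻ x in Q, ENNReal.ofReal (w x) ^ (1 - p / (p - 1))) ^ (p - 1) ≤ C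

/-- The class `A_∞ = ⋃_{p ≥ 1} A_p`. -/
def IsAinfty {n : ℕ} (w : ESp n → ℝ) : Prop :=
  IsA1 w ∨ ∃ p : ℝ, 1 < p ∧ IsAp w p

/-- The Hardy–Littlewood maximal function (over cubes). -/
def maxFn {n : ℕ} (f : ESp n → ℝ) (x : ESp n) : ℝ≥0∞ :=
  ⨆ (Q : Set (ESp n)) (_ : IsCube Q) (_ : x ∈ Q),
    (volume Q)⁻¹ * ∫⁻ y in Q, ENNReal.ofReal |f y|

/-- The Fujii–Wilson `A_∞` constant. -/
def FW {n : ℕ} (w : ESp n → ℝ) : ℝ≥0∞ :=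
  ⨆ (Q : Set (ESp n)) (_ : IsCube Q),
    (wMeas w Q)⁻¹ * ∫⁻ x in Q, maxFn (Q.indicator w) x

/-- The weighted weak `L^{q,∞}(w)` quasinorm of `g`. -/
def wnorm {n : ℕ} (g : ESp n → ℝ≥0∞) (q : ℝ) (w : ESp n → ℝ) : ℝ≥0∞ :=
  ⨆ (t : ℝ) (_ : 0 < t), ENNReal.ofReal t * (wMeas w {x | ENNReal.ofReal t < g x}) ^ (1 / q)

/-- The weighted `L¹(w)` norm. -/
def L1norm {n : ℕ} (f : ESp n → ℝ) (w : ESp n → ℝ) : ℝ≥0∞ :=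
  ∫⁻ x, ENNReal.ofReal (|f x| * w x)

/-- The fractional maximal operator `M_α`. -/
def fracM {n : ℕ} (α : ℝ) (f : ESp n → ℝ) (x : ESp n) : ℝ≥0∞ :=
  ⨆ (Q : Set (ESp n)) (_ : IsCube Q) (_ : x ∈ Q),
    ((volume Q) ^ (1 - α / (n : ℝ)))⁻¹ * ∫⁻ y in Q, ENNReal.ofReal |f y|

/-- The fractional integral (Riesz potential) `I_α`. -/
def fracI {n : ℕ} (α : ℝ) (f : ESp n → ℝ) (x : ESp n) : ℝ :=
  ∫ y, f y / dist x y ^ ((n : ℝ) - α)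

/-- The multi(sub)linear maximal function `𝓜`. -/
def multiM {n m : ℕ} (f : Fin m → ESp n → ℝ) (x : ESp n) : ℝ≥0∞ :=
  ⨆ (Q : Set (ESp n)) (_ : IsCube Q) (_ : x ∈ Q),
    ∏ i, (volume Q)⁻¹ * ∫⁻ y in Q, ENNReal.ofReal |f i y|

/-- The multi(sub)linear fractional maximal operator `𝓜_α`. -/
def multiMα {n m : ℕ} (α : ℝ) (f : Fin m → ESp n → ℝ) (x : ESp n) : ℝ≥0∞ :=
  ⨆ (Q : Set (ESp n)) (_ : IsCube Q) (_ : x ∈ Q),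
    ∏ i, ((volume Q) ^ (1 - α / ((m : ℝ) * (n : ℝ))))⁻¹ * ∫⁻ y in Q, ENNReal.ofReal |f i y|

/-- The multilinear fractional integral `𝓘_α`. -/
def multiIα {n m : ℕ} (α : ℝ) (f : Fin m → ESp n → ℝ) (x : ESp n) : ℝ :=
  ∫ y : Fin m → ESp n, (∏ i, f i (y i)) / (∑ i, dist x (y i)) ^ ((m : ℝ) * (n : ℝ) - α)

/-- The multilinear class `A_{(1,…,1)}`. -/
def A11 {n m : ℕ} (w : Fin m → ESp n → ℝ) : Prop :=
  ∃ C : ℝ≥0∞, C < ⊤ ∧ ∀ Q : Set (ESp n), IsCube Q →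
    ((volume Q)⁻¹ * ∫⁻ x in Q, ENNReal.ofReal (∏ i, w i x ^ ((m : ℝ)⁻¹))) ^ (m : ℝ) *
      ∏ i, (essInf (fun x => ENNReal.ofReal (w i x)) (volume.restrict Q))⁻¹ ≤ C

/-!
Put `p = m q > 1`, `ν = ∏ uᵢ ^ q` and `w = ν v ^ q`. The `A_{(1,…,1)}` condition makes `ν` an `A₁`
weight, hence doubling and, because `w` is an `A_∞` weight, `A_∞` relative to `w`.

If `D = maxᵢ |x - yᵢ|`, then `A_{(1,…,1)}` bounds `ν(B(x, D)) ^ m / |B(x, D)| ^ m` by a multiple of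
`∏ uᵢ(yᵢ) ^ p`, so that the kernel of `I_α` is at most
`C ∏ uᵢ(yᵢ) ν(B(yᵢ, |x - yᵢ|)) ^ (-1 / p)`. The variables thus decouple:
`|I_α f(x)| ≤ C ∏ ∫ |fᵢ| uᵢ ν(B(yᵢ, |x - yᵢ|)) ^ (-1 / p) dyᵢ`.

Since `1 / v` is the product of `m` factors `(v ^ q) ^ (-1 / p)`, each integral absorbs one of them.
The resulting kernel `x ↦ (v(x) ^ q ν(B(y, |x - y|))) ^ (-1 / p)` lies in weak `L^p(w)` uniformly in
`y`, because `ν` is `A_∞` relative to `w`. As `p > 1`, Kolmogorov's inequality on a level set,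
Hölder's inequality with `m` factors and Tonelli's theorem give the weak-type bound.
-/

section

open Filter Topology Metric
open scoped NNReal

section WeakType

variable {X : Type*} [MeasurableSpace X]

theorem volume_ofReal_lt_inter_Ioi (a : ℝ≥0∞) :
    volume ({t : ℝ | ENNReal.ofReal t < a} ∩ Ioi 0) = a := by
  induction a with
  | top => simp
  | coe a =>
    have h : {t : ℝ | ENNReal.ofReal t < a} ∩ Ioi 0 = Ioo 0 (a : ℝ) := by
      ext t
      simp only [mem_inter_iff, mem_ofPred_eq, mem_Ioi, mem_Ioo, and_comm (b := 0 < t)]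
      exact and_congr_right fun ht => by
        rw [← ENNReal.ofReal_coe_nnreal, ENNReal.ofReal_lt_ofReal_iff_of_nonneg ht.le]
    rw [h, Real.volume_Ioo, sub_zero, ENNReal.ofReal_coe_nnreal]

theorem lintegral_eq_lintegral_Ioi_meas_ofReal_lt (μ : Measure X) [SFinite μ] {k : X → ℝ≥0∞}
    (hk : Measurable k) :
    ∫⁻ x, k x ∂μ = ∫⁻ t in Ioi (0 : ℝ), μ {x | ENNReal.ofReal t < k x} := by
  have hmeas : MeasurableSet {z : X × ℝ | ENNReal.ofReal z.2 < k z.1} :=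
    measurableSet_lt (by fun_prop) (by fun_prop)
  calc ∫⁻ x, k x ∂μ
      = ∫⁻ x, (∫⁻ t in Ioi (0 : ℝ), {t : ℝ | ENNReal.ofReal t < k x}.indicator 1 t) ∂μ := by
        refine lintegral_congr fun x => ?_
        rw [lintegral_indicator_one (measurableSet_lt (by fun_prop) (by fun_prop)),
          Measure.restrict_apply (measurableSet_lt (by fun_prop) (by fun_prop)),
          volume_ofReal_lt_inter_Ioi]
    _ = ∫⁻ t in Ioi (0 : ℝ), ∫⁻ x, {x | ENNReal.ofReal t < k x}.indicator 1 x ∂μ :=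
        lintegral_lintegral_swap (f := fun x t => {z : X × ℝ | ENNReal.ofReal z.2 < k z.1}.indicator
          1 (x, t)) (measurable_one.indicator hmeas).aemeasurable
    _ = ∫⁻ t in Ioi (0 : ℝ), μ {x | ENNReal.ofReal t < k x} :=
        lintegral_congr fun t => lintegral_indicator_one (measurableSet_lt (by fun_prop) hk)

theorem lintegral_Ioi_ofReal_rpow_neg {p τ : ℝ} (hp : 1 < p) (hτ : 0 < τ) :
    ∫⁻ t in Ioi τ, ENNReal.ofReal (t ^ (-p)) =
      ENNReal.ofReal (τ ^ (1 - p)) / ENNReal.ofReal (p - 1) := by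
  rw [← ofReal_integral_eq_lintegral_ofReal (integrableOn_Ioi_rpow_of_lt (by linarith) hτ)
    (ae_restrict_of_forall_mem measurableSet_Ioi fun t ht => Real.rpow_nonneg (hτ.trans ht).le _),
    integral_Ioi_rpow_of_lt (by linarith) hτ, ← ENNReal.ofReal_div_of_pos (by linarith),
    ← neg_div_neg_eq, neg_neg]
  ring_nf

theorem setLIntegral_le_of_meas_ofReal_lt_le {μ : Measure X} {k : X → ℝ≥0∞} (hk : Measurable k)
    {p : ℝ} (hp : 1 < p) {D : ℝ≥0∞}
    (hD : ∀ t : ℝ, 0 < t → μ {x | ENNReal.ofReal t < k x} ≤ D * ENNReal.ofReal (t ^ (-p)))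
    {F : Set X} (hF : μ F ≠ ⊤) :
    ∫⁻ x in F, k x ∂μ ≤ (1 + D / ENNReal.ofReal (p - 1)) * μ F ^ (1 - 1 / p) := by
  have := isFiniteMeasure_restrict.2 hF
  obtain hF0 | hF0 := eq_or_ne (μ F) 0
  · rw [setLIntegral_measure_zero _ _ hF0]; exact zero_le
  set M : ℝ := (μ F).toReal
  have hM : 0 < M := ENNReal.toReal_pos hF0 hF
  have hMF : μ F = ENNReal.ofReal M := (ENNReal.ofReal_toReal hF).symm
  set τ : ℝ := M ^ (-(1 / p))
  have hτ : 0 < τ := Real.rpow_pos_of_pos hM _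
  have low : ∫⁻ t in Ioc 0 τ, μ.restrict F {x | ENNReal.ofReal t < k x}
      ≤ μ F ^ (1 - 1 / p) := calc
    _ ≤ ∫⁻ _ in Ioc 0 τ, μ F :=
        lintegral_mono fun t =>
          (measure_mono (subset_univ _)).trans_eq (Measure.restrict_apply_univ F)
    _ = ENNReal.ofReal (M ^ (1 - 1 / p)) := by
        rw [setLIntegral_const, Real.volume_Ioc, sub_zero, hMF, ← ENNReal.ofReal_mul hM.le,
          sub_eq_add_neg, Real.rpow_add hM, Real.rpow_one]
    _ = μ F ^ (1 - 1 / p) := by rw [hMF, ENNReal.ofReal_rpow_of_pos hM]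
  have high : ∫⁻ t in Ioi τ, μ.restrict F {x | ENNReal.ofReal t < k x}
      ≤ D / ENNReal.ofReal (p - 1) * μ F ^ (1 - 1 / p) := calc
    _ ≤ ∫⁻ t in Ioi τ, D * ENNReal.ofReal (t ^ (-p)) :=
        setLIntegral_mono (by fun_prop) fun t ht =>
          (Measure.restrict_apply_le _ _).trans (hD t (hτ.trans ht))
    _ = D / ENNReal.ofReal (p - 1) * μ F ^ (1 - 1 / p) := by
        rw [lintegral_const_mul _ (by fun_prop), lintegral_Ioi_ofReal_rpow_neg hp hτ,
          ← Real.rpow_mul hM.le, show -(1 / p) * (1 - p) = 1 - 1 / p by field_simp; ring, hMF,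
          ENNReal.ofReal_rpow_of_pos hM, ENNReal.mul_comm_div]
  calc ∫⁻ x in F, k x ∂μ
      = ∫⁻ t in Ioi (0 : ℝ), μ.restrict F {x | ENNReal.ofReal t < k x} :=
        lintegral_eq_lintegral_Ioi_meas_ofReal_lt _ hk
    _ ≤ μ F ^ (1 - 1 / p) + D / ENNReal.ofReal (p - 1) * μ F ^ (1 - 1 / p) := by
        rw [← Ioc_union_Ioi_eq_Ioi hτ.le]
        exact (lintegral_union_le _ _ _).trans (add_le_add low high)
    _ = (1 + D / ENNReal.ofReal (p - 1)) * μ F ^ (1 - 1 / p) := by rw [add_mul, one_mul]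

theorem mul_meas_rpow_le_of_setLIntegral_le {ι : Type*} [Fintype ι] [Nonempty ι] {μ : Measure X}
    {G : ι → X → ℝ≥0∞} (hG : ∀ i, Measurable (G i)) {A : ι → ℝ≥0∞} {p : ℝ} (hp : 0 < p)
    {S : Set X} (hS : MeasurableSet S) (hSt : μ S ≠ ⊤) {t : ℝ≥0∞}
    (ht : ∀ x ∈ S, t ≤ ∏ i, G i x) (hA : ∀ i, ∫⁻ x in S, G i x ∂μ ≤ A i * μ S ^ (1 - 1 / p)) :
    t * μ S ^ (Fintype.card ι / p) ≤ ∏ i, A i := by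
  obtain ⟨m, hm_def⟩ : ∃ m : ℝ, m = Fintype.card ι := ⟨_, rfl⟩
  have hm : 0 < m := hm_def ▸ mod_cast Fintype.card_pos
  rw [← hm_def]
  obtain hS0 | hS0 := eq_or_ne (μ S) 0
  · rw [hS0, ENNReal.zero_rpow_of_pos (by positivity), mul_zero]; exact zero_le
  have hroot : (t * μ S ^ (m / p)) ^ (1 / m) * μ S ^ (1 - 1 / p)
      ≤ (∏ i, A i) ^ (1 / m) * μ S ^ (1 - 1 / p) := calc
    _ = ∫⁻ _ in S, t ^ (1 / m) ∂μ := by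
        rw [setLIntegral_const, ENNReal.mul_rpow_of_nonneg _ _ (by positivity), mul_assoc,
          ← ENNReal.rpow_mul, ← ENNReal.rpow_add _ _ hS0 hSt,
          show m / p * (1 / m) + (1 - 1 / p) = 1 by field_simp; ring, ENNReal.rpow_one]
    _ ≤ ∫⁻ x in S, ∏ i, G i x ^ (1 / m) ∂μ := by
        refine setLIntegral_mono' hS fun x hx => ?_
        rw [ENNReal.prod_rpow_of_nonneg (by positivity)]
        exact ENNReal.rpow_le_rpow (ht x hx) (by positivity)
    _ ≤ ∏ i, (∫⁻ x in S, G i x ∂μ) ^ (1 / m) :=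
        ENNReal.lintegral_prod_norm_pow_le _ (fun i _ => (hG i).aemeasurable)
          (by simp [← hm_def, hm.ne']) fun _ _ => by positivity
    _ ≤ ∏ i, (A i * μ S ^ (1 - 1 / p)) ^ (1 / m) := by
        gcongr with i
        exact hA i
    _ = (∏ i, A i) ^ (1 / m) * μ S ^ (1 - 1 / p) := by
        rw [ENNReal.prod_rpow_of_nonneg (by positivity), Finset.prod_mul_distrib,
          Finset.prod_const, Finset.card_univ, ENNReal.mul_rpow_of_nonneg _ _ (by positivity),
          ← ENNReal.rpow_natCast, ← hm_def, ← ENNReal.rpow_mul (_ ^ _), mul_one_div_cancel hm.ne',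
          ENNReal.rpow_one]
  have hpos : μ S ^ (1 - 1 / p) ≠ 0 := by simp [hS0, hSt]
  have hfin : μ S ^ (1 - 1 / p) ≠ ⊤ := by simp [hS0, hSt]
  exact (ENNReal.rpow_le_rpow_iff (by positivity)).1
    ((ENNReal.mul_le_mul_iff_left hpos hfin).1 hroot)

theorem mul_meas_rpow_le_of_forall_subset {μ : Measure X} [SigmaFinite μ] {E : Set X}
    (hE : MeasurableSet E) {t : ℝ≥0} {s : ℝ} (hs : 0 < s) {A : ℝ≥0∞}
    (h : ∀ S ⊆ E, MeasurableSet S → μ S ≠ ⊤ → t * μ S ^ s ≤ A) : t * μ E ^ s ≤ A := by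
  obtain rfl | ht := eq_or_ne t 0
  · simp
  by_contra! hlt
  have ht' : (t : ℝ≥0∞) ≠ 0 := mod_cast ht
  have hAE : (A / t) ^ s⁻¹ < μ E := by
    rwa [ENNReal.rpow_inv_lt_iff hs, ENNReal.div_lt_iff (.inl ht') (.inl coe_ne_top), mul_comm]
  obtain ⟨S, hS, hSE, hlt, htop⟩ := Measure.exists_subset_measure_lt_top hE hAE
  rw [ENNReal.rpow_inv_lt_iff hs, ENNReal.div_lt_iff (.inl ht') (.inl coe_ne_top), mul_comm] at hlt
  exact hlt.not_ge (h S hSE hS htop.ne)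

theorem mul_meas_rpow_le_prod_lintegral {Y ι : Type*} [MeasurableSpace Y] [Fintype ι] [Nonempty ι]
    {μ : Measure X} [SigmaFinite μ] {ρ : Measure Y} [SFinite ρ] {κ : X → Y → ℝ≥0∞}
    (hκ : Measurable (Function.uncurry κ)) {p : ℝ} (hp : 1 < p) {D : ℝ≥0∞}
    (hD : ∀ y (t : ℝ), 0 < t → μ {x | ENNReal.ofReal t < κ x y} ≤ D * ENNReal.ofReal (t ^ (-p)))
    {F : ι → Y → ℝ≥0∞} (hF : ∀ i, Measurable (F i)) (t : ℝ≥0) :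
    t * μ {x | t ≤ ∏ i, ∫⁻ y, F i y * κ x y ∂ρ} ^ (Fintype.card ι / p)
      ≤ ∏ i, ((1 + D / ENNReal.ofReal (p - 1)) * ∫⁻ y, F i y ∂ρ) := by
  have hFκ (i) : Measurable fun z : X × Y => F i z.2 * κ z.1 z.2 :=
    ((hF i).comp measurable_snd).mul hκ
  have hG (i) : Measurable fun x => ∫⁻ y, F i y * κ x y ∂ρ := (hFκ i).lintegral_prod_right'
  refine mul_meas_rpow_le_of_forall_subset
    (measurableSet_le measurable_const (Finset.measurable_fun_prod _ fun i _ => hG i))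
    (div_pos (mod_cast Fintype.card_pos) (zero_lt_one.trans hp)) fun S hSE hS hSt =>
      mul_meas_rpow_le_of_setLIntegral_le hG (zero_lt_one.trans hp) hS hSt (fun x hx => hSE hx)
        fun i => ?_
  have := isFiniteMeasure_restrict.2 hSt
  calc ∫⁻ x in S, ∫⁻ y, F i y * κ x y ∂ρ ∂μ
      = ∫⁻ y, F i y * ∫⁻ x in S, κ x y ∂μ ∂ρ := by
        rw [lintegral_lintegral_swap (hFκ i).aemeasurable]
        exact lintegral_congr fun y => lintegral_const_mul _ (hκ.comp measurable_prodMk_right)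
    _ ≤ ∫⁻ y, F i y * ((1 + D / ENNReal.ofReal (p - 1)) * μ S ^ (1 - 1 / p)) ∂ρ := by
        gcongr with y
        exact setLIntegral_le_of_meas_ofReal_lt_le (hκ.comp measurable_prodMk_right) hp (hD y) hSt
    _ = (1 + D / ENNReal.ofReal (p - 1)) * (∫⁻ y, F i y ∂ρ) * μ S ^ (1 - 1 / p) := by
        rw [lintegral_mul_const _ (hF i)]; ring

end WeakType

section Products

theorem prod_piFinSuccAbove_symm {m : ℕ} {E : Fin (m + 1) → Type*} [∀ i, MeasurableSpace (E i)]
    {M : Type*} [CommMonoid M] (j : Fin (m + 1)) (G : ∀ i, E i → M)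
    (z : E j × ∀ i, E (j.succAbove i)) :
    ∏ i, G i ((MeasurableEquiv.piFinSuccAbove E j).symm z i) =
      G j z.1 * ∏ i, G (j.succAbove i) (z.2 i) := by
  simp [Fin.prod_univ_succAbove _ j]

theorem lintegral_fin_prod_eq_prod {m : ℕ} {E : Fin m → Type*} [∀ i, MeasurableSpace (E i)]
    {μ : ∀ i, Measure (E i)} [∀ i, SigmaFinite (μ i)] {G : ∀ i, E i → ℝ≥0∞}
    (hG : ∀ i, Measurable (G i)) :
    ∫⁻ y, ∏ i, G i (y i) ∂Measure.pi μ = ∏ i, ∫⁻ y, G i y ∂μ i := by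
  induction m with
  | zero => simp
  | succ m ih =>
    have hmp := (measurePreserving_piFinSuccAbove μ 0).symm
    have htail : Measurable fun y : ∀ i : Fin m, E (Fin.succAbove 0 i) =>
        ∏ i, G (Fin.succAbove 0 i) (y i) :=
      Finset.measurable_fun_prod _ fun i _ => (hG _).comp (measurable_pi_apply i)
    calc ∫⁻ y, ∏ i, G i (y i) ∂Measure.pi μ
        = ∫⁻ z, G 0 z.1 * ∏ i, G (Fin.succAbove 0 i) (z.2 i)
            ∂(μ 0).prod (Measure.pi fun i : Fin m => μ (Fin.succAbove 0 i)) := by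
          rw [← hmp.lintegral_comp_emb (MeasurableEquiv.measurableEmbedding _)]
          exact lintegral_congr fun z => prod_piFinSuccAbove_symm 0 G z
      _ = (∫⁻ y, G 0 y ∂μ 0) * ∏ i, ∫⁻ y, G (Fin.succAbove 0 i) y ∂μ (Fin.succAbove 0 i) := by
          rw [← ih (μ := fun i => μ (Fin.succAbove 0 i)) fun i => hG _]
          exact lintegral_prod_mul (hG 0).aemeasurable htail.aemeasurable
      _ = ∏ i, ∫⁻ y, G i y ∂μ i :=
          (Fin.prod_univ_succAbove (fun i => ∫⁻ y, G i y ∂μ i) 0).symm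

theorem aemeasurable_or_ae_eq_zero_of_mul {X Y : Type*} [MeasurableSpace X] [MeasurableSpace Y]
    {μ : Measure X} {ρ : Measure Y} [SFinite μ] [SFinite ρ] {f : X → ℝ} {g : Y → ℝ}
    (h : AEMeasurable (fun z : X × Y => f z.1 * g z.2) (μ.prod ρ)) :
    AEMeasurable f μ ∨ ∀ᵐ y ∂ρ, g y = 0 := by
  refine or_iff_not_imp_left.2 fun hf => ?_
  have hswap : AEStronglyMeasurable (fun z : Y × X => f z.2 * g z.1) (ρ.prod μ) :=
    h.aestronglyMeasurable.prod_swap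
  filter_upwards [hswap.prodMk_left] with y hy
  by_contra hne
  exact hf <| (hy.aemeasurable.mul_const (g y)⁻¹).congr <|
    .of_forall fun x => mul_inv_cancel_right₀ hne (f x)

theorem aemeasurable_or_ae_prod_eq_zero {m : ℕ} {E : Fin m → Type*} [∀ i, MeasurableSpace (E i)]
    {μ : ∀ i, Measure (E i)} [∀ i, SigmaFinite (μ i)] {f : ∀ i, E i → ℝ}
    (h : AEMeasurable (fun y : ∀ i, E i => ∏ i, f i (y i)) (Measure.pi μ)) (j : Fin m) :
    AEMeasurable (f j) (μ j) ∨ ∀ᵐ y ∂Measure.pi μ, ∏ i, f i (y i) = 0 := by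
  cases m with
  | zero => exact j.elim0
  | succ m =>
    have hmp := measurePreserving_piFinSuccAbove μ j
    have hmul : AEMeasurable (fun z : E j × (∀ i, E (j.succAbove i)) =>
        f j z.1 * ∏ i, f (j.succAbove i) (z.2 i))
        ((μ j).prod (Measure.pi fun i => μ (j.succAbove i))) := by
      convert h.comp_quasiMeasurePreserving hmp.symm.quasiMeasurePreserving with z
      exact (prod_piFinSuccAbove_symm j f z).symm
    refine (aemeasurable_or_ae_eq_zero_of_mul
      (g := fun y : ∀ i, E (j.succAbove i) => ∏ i, f (j.succAbove i) (y i)) hmul).imp_right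
        fun h0 => ?_
    filter_upwards [(Measure.quasiMeasurePreserving_snd.comp hmp.quasiMeasurePreserving).ae h0]
      with y hy
    rw [Fin.prod_univ_succAbove _ j]
    exact mul_eq_zero_of_right _ hy

end Products

section MultiIα

variable {n m : ℕ} {α : ℝ}

theorem ae_sum_dist_pos (hn : 0 < n) (hm : 0 < m) (x : ESp n) :
    ∀ᵐ y : Fin m → ESp n, 0 < ∑ i, dist x (y i) := by
  have : Nonempty (Fin n) := ⟨⟨0, hn⟩⟩
  filter_upwards [(Measure.quasiMeasurePreserving_eval
    (μ := fun _ : Fin m => (volume : Measure (ESp n))) ⟨0, hm⟩).ae (Measure.ae_ne volume x)]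
    with y hy
  exact Finset.sum_pos' (fun i _ => dist_nonneg) ⟨_, Finset.mem_univ _, dist_pos.2 hy.symm⟩

theorem multiIα_eq_zero_of_not_aemeasurable (hn : 0 < n) {f : Fin m → ESp n → ℝ} {j : Fin m}
    (hj : ¬AEMeasurable (f j)) (x : ESp n) : multiIα α f x = 0 := by
  by_contra hne
  have hint := not_imp_comm.1 integral_undef hne
  have hprod : AEMeasurable fun y : Fin m → ESp n => ∏ i, f i (y i) := by
    have hR : Measurable fun y : Fin m → ESp n =>
        (∑ i, dist x (y i)) ^ ((m : ℝ) * (n : ℝ) - α) := by fun_prop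
    refine (hint.aemeasurable.mul hR.aemeasurable).congr ?_
    filter_upwards [ae_sum_dist_pos hn j.pos x] with y hy
    exact div_mul_cancel₀ _ (Real.rpow_pos_of_pos hy _).ne'
  refine hne (integral_eq_zero_of_ae ?_)
  filter_upwards [(aemeasurable_or_ae_prod_eq_zero hprod j).resolve_left hj] with y hy
  simp [hy]

-- `f` is arbitrary in the theorem: when some `f i` is not measurable the Bochner integral is `0`.
theorem exists_measurable_multiIα_eq (hn : 0 < n) (α : ℝ) (f u : Fin m → ESp n → ℝ) :
    ∃ g : Fin m → ESp n → ℝ, (∀ i, Measurable (g i)) ∧ multiIα α g = multiIα α f ∧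
      ∀ i, L1norm (g i) (u i) ≤ L1norm (f i) (u i) := by
  by_cases hf : ∀ i, AEMeasurable (f i)
  · refine ⟨fun i => (hf i).mk, fun i => (hf i).measurable_mk, funext fun x => ?_, fun i => ?_⟩
    · have hae : ∀ᵐ y : Fin m → ESp n, ∀ i, f i (y i) = (hf i).mk _ (y i) :=
        ae_all_iff.2 fun i => (Measure.quasiMeasurePreserving_eval
          (μ := fun _ : Fin m => (volume : Measure (ESp n))) i).ae (hf i).ae_eq_mk
      refine integral_congr_ae ?_
      filter_upwards [hae] with y hy
      simp only [hy]
    · refine (lintegral_congr_ae ?_).le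
      filter_upwards [(hf i).ae_eq_mk] with y hy
      rw [hy]
  · obtain ⟨j, hj⟩ := not_forall.1 hf
    refine ⟨0, fun _ => measurable_const, funext fun x => ?_, fun i => ?_⟩
    · rw [multiIα_eq_zero_of_not_aemeasurable hn hj]
      simp [multiIα, Finset.prod_eq_zero (Finset.mem_univ j)]
    · simp [L1norm]

end MultiIα

theorem closedBall_union_iUnion_annuli {X : Type*} [PseudoMetricSpace X] (x : X) {R : ℝ}
    (hR : 0 < R) :
    closedBall x R ∪ ⋃ j : ℕ, closedBall x (3 * (3 ^ j * R)) \ closedBall x (3 ^ j * R) =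
      univ := by
  refine eq_univ_of_forall fun z => ?_
  obtain ⟨j, hj⟩ : ∃ j : ℕ, z ∈ closedBall x (3 ^ j * R) := by
    obtain ⟨j, hj⟩ := pow_unbounded_of_one_lt (dist z x / R) (by norm_num : (1 : ℝ) < 3)
    exact ⟨j, (div_le_iff₀ hR).1 hj.le⟩
  induction j with
  | zero => exact .inl (by simpa using hj)
  | succ j ih =>
    by_cases hzj : z ∈ closedBall x (3 ^ j * R)
    · exact ih hzj
    · exact .inr (mem_iUnion.2 ⟨j, by convert hj using 2; ring, hzj⟩)

section AinftyOnBalls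

variable {X : Type*} [PseudoMetricSpace X] [MeasurableSpace X]

/-- The Coifman–Fefferman form of `ν ∈ A_∞(μ)`, tested on balls. It makes sense between arbitrary
measures, so that it can be composed. -/
def AinftyOnBalls (ν μ : Measure X) : Prop :=
  ∃ C : ℝ≥0, ∃ ε : ℝ, 0 < ε ∧ ∀ x r, 0 < r → ∀ F ⊆ closedBall x r, MeasurableSet F →
    ν F ≤ C * (μ F / μ (closedBall x r)) ^ ε * ν (closedBall x r)

/-- The `ν`-mass of the ball centred at `y` with `x` on its boundary, which replaces
`dist x y ^ n` in kernels adapted to `ν`. -/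
def ballMass (ν : Measure X) (x y : X) : ℝ≥0∞ := ν (closedBall y (dist x y))

theorem AinftyOnBalls.trans {ν μ ρ : Measure X} (hνμ : AinftyOnBalls ν μ)
    (hμρ : AinftyOnBalls μ ρ) : AinftyOnBalls ν ρ := by
  obtain ⟨C, ε, hε, hC⟩ := hνμ
  obtain ⟨K, δ, hδ, hK⟩ := hμρ
  refine ⟨C * K ^ ε, δ * ε, by positivity, fun x r hr F hFB hF => ?_⟩
  calc ν F ≤ C * (μ F / μ (closedBall x r)) ^ ε * ν (closedBall x r) := hC x r hr F hFB hF
    _ ≤ C * (K * (ρ F / ρ (closedBall x r)) ^ δ) ^ ε * ν (closedBall x r) := by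
        gcongr
        exact ENNReal.div_le_of_le_mul (hK x r hr F hFB hF)
    _ = (C * K ^ ε : ℝ≥0) * (ρ F / ρ (closedBall x r)) ^ (δ * ε) * ν (closedBall x r) := by
        rw [ENNReal.mul_rpow_of_nonneg _ _ hε.le, ENNReal.rpow_mul, ENNReal.coe_mul,
          ENNReal.coe_rpow_of_nonneg _ hε.le]
        ring

theorem AinftyOnBalls.exists_measure_closedBall_le {μ ρ : Measure X} [ProperSpace X]
    [IsFiniteMeasureOnCompacts μ] [μ.IsOpenPosMeasure] (h : AinftyOnBalls μ ρ) (a : ℝ≥0) :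
    ∃ A : ℝ≥0, ∀ x r, 0 < r → ∀ F ⊆ closedBall x r, MeasurableSet F →
      μ (closedBall x r) ≤ a * μ F → ρ (closedBall x r) ≤ A * ρ F := by
  obtain ⟨C, ε, hε, hC⟩ := h
  refine ⟨(a * C) ^ ε⁻¹, fun x r hr F hFB hF haF => ?_⟩
  set B := closedBall x r
  have hone : 1 ≤ (a * C : ℝ≥0) * (ρ F / ρ B) ^ ε := by
    refine (ENNReal.mul_le_mul_iff_left (measure_closedBall_pos μ x hr).ne'
      measure_closedBall_lt_top.ne).1 ?_
    calc 1 * μ B ≤ a * μ F := by rwa [one_mul]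
      _ ≤ a * (C * (ρ F / ρ B) ^ ε * μ B) := by gcongr; exact hC x r hr F hFB hF
      _ = (a * C : ℝ≥0) * (ρ F / ρ B) ^ ε * μ B := by push_cast; ring
  have hroot : 1 ≤ ((a * C) ^ ε⁻¹ : ℝ≥0) * (ρ F / ρ B) := by
    have := ENNReal.rpow_le_rpow hone (inv_nonneg.2 hε.le)
    rwa [ENNReal.one_rpow, ENNReal.mul_rpow_of_nonneg _ _ (inv_nonneg.2 hε.le),
      ENNReal.rpow_rpow_inv hε.ne', ← ENNReal.coe_rpow_of_nonneg _ (inv_nonneg.2 hε.le)] at this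
  calc ρ B ≤ ((a * C) ^ ε⁻¹ : ℝ≥0) * (ρ F / ρ B) * ρ B := le_mul_of_one_le_left' hroot
    _ ≤ ((a * C) ^ ε⁻¹ : ℝ≥0) * ρ F := by
        rw [mul_assoc, mul_comm (_ / _)]; gcongr; exact ENNReal.mul_div_le

theorem measurable_ballMass [OpensMeasurableSpace X] [SecondCountableTopology X] (ν : Measure X)
    [SFinite ν] : Measurable (Function.uncurry (ballMass ν)) := by
  have hS : MeasurableSet {z : (X × X) × X | dist z.2 z.1.2 ≤ dist z.1.1 z.1.2} :=
    measurableSet_le (by fun_prop) (by fun_prop)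
  exact measurable_measure_prodMk_left hS

end AinftyOnBalls

section Kernel

variable {X : Type*} [PseudoMetricSpace X] [MeasurableSpace X] {ν : Measure X} {h : X → ℝ≥0∞}
  {D η : ℝ≥0}

theorem withDensity_annulus_le [ProperSpace X] [IsFiniteMeasureOnCompacts ν]
    [ν.IsOpenPosMeasure]
    (hD : ∀ x r, 0 < r → ν (closedBall x (3 * r)) ≤ D * ν (closedBall x r)) {C : ℝ≥0} {ε : ℝ}
    (hε : 0 < ε) (hC : ∀ x r, 0 < r → ∀ F ⊆ closedBall x r, MeasurableSet F →
      ν F ≤ C * (ν.withDensity h F / ν.withDensity h (closedBall x r)) ^ ε * ν (closedBall x r))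
    {y : X} {r : ℝ} (hr : 0 < r) {s T : ℝ≥0∞}
    (hs : s ≤ T * ν.withDensity h (closedBall y (3 * r))) {F : Set X} (hF : MeasurableSet F)
    (hFB : F ⊆ closedBall y (3 * r) \ closedBall y r) (hFs : ∀ x ∈ F, h x * ballMass ν x y ≤ s) :
    ν.withDensity h F ≤ C * (D * T) ^ ε * D * s := by
  have hB0 : ν (closedBall y r) ≠ 0 := (measure_closedBall_pos ν y hr).ne'
  have hBt : ν (closedBall y r) ≠ ⊤ := measure_closedBall_lt_top.ne
  have hmul : ν.withDensity h F * ν (closedBall y r) ≤ s * ν F := calc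
    _ = ∫⁻ x in F, h x * ν (closedBall y r) ∂ν := by
        rw [withDensity_apply _ hF, lintegral_mul_const' _ _ hBt]
    _ ≤ ∫⁻ _ in F, s ∂ν := by
        refine setLIntegral_mono' hF fun x hx => le_trans ?_ (hFs x hx)
        have hrx : r ≤ dist x y := (not_le.1 (hFB hx).2).le
        exact mul_le_mul_right (measure_mono (closedBall_subset_closedBall hrx)) _
    _ = s * ν F := setLIntegral_const ..
  have hwF : ν.withDensity h F ≤ D * s := by
    refine (ENNReal.mul_le_mul_iff_left hB0 hBt).1 (hmul.trans ?_)
    calc s * ν F ≤ s * (D * ν (closedBall y r)) := by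
          gcongr; exact (measure_mono (hFB.trans sdiff_subset)).trans (hD y r hr)
      _ = D * s * ν (closedBall y r) := by ring
  have hratio : ν.withDensity h F / ν.withDensity h (closedBall y (3 * r)) ≤ D * T := by
    refine ENNReal.div_le_of_le_mul (hwF.trans ?_)
    rw [mul_assoc]
    gcongr
  refine (ENNReal.mul_le_mul_iff_left hB0 hBt).1 (hmul.trans ?_)
  calc s * ν F ≤ s * (C * (D * T) ^ ε * (D * ν (closedBall y r))) := by
        gcongr
        exact (hC y _ (by positivity) F (hFB.trans sdiff_subset) hF).trans
          (by gcongr; exact hD y r hr)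
    _ = C * (D * T) ^ ε * D * s * ν (closedBall y r) := by ring

variable {w : Measure X}

theorem measure_closedBall_le_pow_mul
    (hη : ∀ x r, 0 < r → w (closedBall x r) ≤ η * w (closedBall x (3 * r))) (x : X) {r : ℝ}
    (hr : 0 < r) (j : ℕ) : w (closedBall x r) ≤ η ^ j * w (closedBall x (3 ^ j * r)) := by
  induction j with
  | zero => simp
  | succ j ih =>
    calc w (closedBall x r) ≤ η ^ j * w (closedBall x (3 ^ j * r)) := ih
      _ ≤ η ^ j * (η * w (closedBall x (3 * (3 ^ j * r)))) := by
          gcongr; exact hη x _ (by positivity)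
      _ = η ^ (j + 1) * w (closedBall x (3 ^ (j + 1) * r)) := by rw [← mul_assoc]; ring_nf

theorem exists_measure_closedBall_le_lt (hη1 : η < 1)
    (hη : ∀ x r, 0 < r → w (closedBall x r) ≤ η * w (closedBall x (3 * r))) {x : X}
    (hfin : w (closedBall x 1) ≠ ⊤) {s : ℝ≥0∞} (hs : s ≠ 0)
    (hlarge : ∃ r, s < w (closedBall x r)) :
    ∃ R, 0 < R ∧ w (closedBall x R) ≤ s ∧ s < w (closedBall x (3 * R)) := by
  have hmono {k l : ℤ} (hkl : k ≤ l) :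
      w (closedBall x ((3 : ℝ) ^ k)) ≤ w (closedBall x ((3 : ℝ) ^ l)) :=
    measure_mono (closedBall_subset_closedBall (zpow_le_zpow_right₀ (by norm_num) hkl))
  obtain ⟨j, hj⟩ : ∃ j : ℕ, w (closedBall x ((3 : ℝ) ^ (-j : ℤ))) ≤ s := by
    have hlim : Tendsto (fun j : ℕ => (η : ℝ≥0∞) ^ j * w (closedBall x 1)) atTop (𝓝 0) := by
      simpa using ENNReal.Tendsto.mul_const
        (ENNReal.tendsto_pow_atTop_nhds_zero_of_lt_one (mod_cast hη1)) (.inr hfin)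
    obtain ⟨j, hj⟩ := (hlim.eventually_lt_const hs.bot_lt).exists
    refine ⟨j, le_trans ?_ hj.le⟩
    simpa using measure_closedBall_le_pow_mul hη x
      (r := (3 : ℝ) ^ (-j : ℤ)) (by positivity) j
  obtain ⟨l, hl⟩ : ∃ l : ℕ, s < w (closedBall x ((3 : ℝ) ^ (l : ℤ))) := by
    obtain ⟨r, hr⟩ := hlarge
    obtain ⟨l, hl⟩ := pow_unbounded_of_one_lt r (by norm_num : (1 : ℝ) < 3)
    exact ⟨l, hr.trans_le (measure_mono (closedBall_subset_closedBall (by exact_mod_cast hl.le)))⟩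
  obtain ⟨k, hk, hmax⟩ := Int.exists_greatest_of_bdd
    (P := fun k : ℤ => w (closedBall x ((3 : ℝ) ^ k)) ≤ s)
    ⟨l, fun k hk => not_lt.1 fun hlk => (hl.trans_le (hmono hlk.le)).not_ge hk⟩ ⟨-j, hj⟩
  refine ⟨3 ^ k, by positivity, hk, not_le.1 fun hk1 => ?_⟩
  rw [← zpow_one_add₀ (by norm_num)] at hk1
  exact absurd (hmax _ hk1) (by lia)

theorem measure_le_of_forall_measure_closedBall_le {s : ℝ≥0∞} (x : X)
    (hs : ∀ r, w (closedBall x r) ≤ s) : w univ ≤ s := by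
  rw [← iUnion_closedBall_nat x, Monotone.measure_iUnion fun i j hij =>
    closedBall_subset_closedBall (Nat.cast_le.2 hij)]
  exact iSup_le fun k => hs k

theorem exists_withDensity_mul_ballMass_lt_le [ProperSpace X] [OpensMeasurableSpace X]
    [IsFiniteMeasureOnCompacts ν] [ν.IsOpenPosMeasure] (hh : Measurable h)
    [IsFiniteMeasureOnCompacts (ν.withDensity h)]
    (hD : ∀ x r, 0 < r → ν (closedBall x (3 * r)) ≤ D * ν (closedBall x r)) (hη1 : η < 1)
    (hη : ∀ x r, 0 < r →
      ν.withDensity h (closedBall x r) ≤ η * ν.withDensity h (closedBall x (3 * r)))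
    (hA : AinftyOnBalls ν (ν.withDensity h)) :
    ∃ K : ℝ≥0, ∀ y, ∀ s ≠ 0, ν.withDensity h {x | h x * ballMass ν x y < s} ≤ K * s := by
  obtain ⟨C, ε, hε, hC⟩ := hA
  set w := ν.withDensity h
  have hηε : (η : ℝ≥0∞) ^ ε < 1 := ENNReal.rpow_lt_one (mod_cast hη1) hε
  obtain ⟨K, hK⟩ : ∃ K : ℝ≥0, (K : ℝ≥0∞) = 1 + C * D ^ ε * D * (1 - (η : ℝ≥0∞) ^ ε)⁻¹ := by
    refine ⟨_, ENNReal.coe_toNNReal ?_⟩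
    finiteness [(tsub_pos_of_lt hηε).ne', hε.le]
  refine ⟨K, fun y s hs => ?_⟩
  by_cases hlarge : ∃ r, s < w (closedBall y r)
  · obtain ⟨R, hR, hRs, hsR⟩ := exists_measure_closedBall_le_lt hη1 hη
      measure_closedBall_lt_top.ne hs hlarge
    set E := {x | h x * ballMass ν x y < s}
    have hE : MeasurableSet E := measurableSet_lt
      (hh.mul ((measurable_ballMass ν).comp measurable_prodMk_right)) measurable_const
    set A : ℕ → Set X := fun j => closedBall y (3 * (3 ^ j * R)) \ closedBall y (3 ^ j * R)
    have hpiece (j : ℕ) : w (E ∩ A j) ≤ C * D ^ ε * D * s * ((η : ℝ≥0∞) ^ ε) ^ j := by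
      have hsj : s ≤ η ^ j * w (closedBall y (3 * (3 ^ j * R))) := by
        rw [mul_left_comm 3]
        exact hsR.le.trans (measure_closedBall_le_pow_mul hη y (by positivity) j)
      refine (withDensity_annulus_le hD hε hC (by positivity) hsj
        (hE.inter (measurableSet_closedBall.diff measurableSet_closedBall)) inter_subset_right
        fun x hx => hx.1.le).trans_eq ?_
      rw [ENNReal.mul_rpow_of_nonneg _ _ hε.le, ← ENNReal.rpow_natCast_mul,
        ← ENNReal.rpow_mul_natCast, mul_comm ε]
      ac_rfl
    calc w E ≤ w (closedBall y R ∪ ⋃ j, E ∩ A j) := by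
          rw [← inter_iUnion, union_inter_distrib_left, closedBall_union_iUnion_annuli y hR,
            inter_univ]
          exact measure_mono subset_union_right
      _ ≤ s + ∑' j, C * D ^ ε * D * s * ((η : ℝ≥0∞) ^ ε) ^ j :=
          (measure_union_le _ _).trans
            (add_le_add hRs ((measure_iUnion_le _).trans (ENNReal.tsum_le_tsum hpiece)))
      _ = K * s := by rw [ENNReal.tsum_mul_left, ENNReal.tsum_geometric, hK]; ring
  · push Not at hlarge
    calc w {x | h x * ballMass ν x y < s} ≤ w univ := measure_mono (subset_univ _)
      _ ≤ 1 * s := by simpa using measure_le_of_forall_measure_closedBall_le y hlarge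
      _ ≤ K * s := by gcongr; simp [hK]

end Kernel

theorem exists_and_not_two_mul {P : ℝ → Prop} {R : ℝ} (hR : 0 < R) (hPR : ¬P R)
    (hP : ∀ᶠ r in 𝓝[>] 0, P r) : ∃ r, 0 < r ∧ 2 * r ≤ R ∧ P r ∧ ¬P (2 * r) := by
  classical
  have hlim : Tendsto (fun k : ℕ => R / 2 ^ k) atTop (𝓝[>] 0) := by
    refine tendsto_nhdsWithin_iff.2 ⟨?_, .of_forall fun k => by simp only [mem_Ioi]; positivity⟩
    exact tendsto_const_nhds.div_atTop (tendsto_pow_atTop_atTop_of_one_lt one_lt_two)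
  have hex : ∃ k : ℕ, P (R / 2 ^ k) := (hlim.eventually hP).exists
  obtain ⟨k, hk⟩ : ∃ k, Nat.find hex = k + 1 :=
    Nat.exists_eq_succ_of_ne_zero fun h0 => hPR (by simpa [h0] using Nat.find_spec hex)
  have htwo : 2 * (R / 2 ^ (k + 1)) = R / 2 ^ k := by rw [pow_succ]; field_simp
  refine ⟨R / 2 ^ (k + 1), by positivity, ?_, hk ▸ Nat.find_spec hex, ?_⟩
  · rw [htwo]
    exact div_le_self hR.le (one_le_pow₀ one_le_two)
  · rw [htwo]
    exact Nat.find_min hex (by omega)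

theorem exists_pow_add_pow_mul_le_mul_rpow {θ N : ℝ} (hθ0 : 0 < θ) (hθ1 : θ < 1) (hN : 1 ≤ N) :
    ∃ δ : ℝ, 0 < δ ∧ ∀ t : ℝ, 0 < t → t ≤ 1 → ∃ i : ℕ, θ ^ i + N ^ i * t ≤ 2 / θ * t ^ δ := by
  have hb0 : 0 < θ / N := by positivity
  have hb1 : θ / N < 1 := (div_lt_one (by positivity)).2 (hθ1.trans_le hN)
  set δ := Real.logb (θ / N) θ
  have hδ : 0 < δ := Real.logb_pos_of_base_lt_one hb0 hb1 hθ0 hθ1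
  have hbδ : (θ / N) ^ δ = θ := Real.rpow_logb hb0 hb1.ne hθ0
  refine ⟨δ, hδ, fun t ht0 ht1 => ?_⟩
  obtain ⟨i, hlt, hle⟩ := exists_nat_pow_near_of_lt_one ht0 ht1 hb0 hb1
  refine ⟨i, ?_⟩
  calc θ ^ i + N ^ i * t ≤ θ ^ i + N ^ i * (θ / N) ^ i := by gcongr
    _ = 2 / θ * ((θ / N) ^ δ) ^ (i + 1) := by rw [hbδ, div_pow, pow_succ]; field_simp; norm_num
    _ = 2 / θ * ((θ / N) ^ (i + 1)) ^ δ := by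
        rw [← Real.rpow_mul_natCast hb0.le, mul_comm δ, Real.rpow_natCast_mul hb0.le]
    _ ≤ 2 / θ * t ^ δ := by gcongr

theorem withDensity_le_add {X : Type*} [MeasurableSpace X] {μ : Measure X} {g : X → ℝ≥0∞}
    (hg : Measurable g) (a : ℝ≥0∞) {F : Set X} (hF : MeasurableSet F) :
    μ.withDensity g F ≤ μ.withDensity g (F ∩ {x | a < g x}) + a * μ F := by
  have hm : MeasurableSet {x | a < g x} := measurableSet_lt measurable_const hg
  rw [← measure_inter_add_sdiff F hm, withDensity_apply _ (hF.diff hm)]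
  gcongr
  calc ∫⁻ x in F \ {x | a < g x}, g x ∂μ ≤ ∫⁻ _ in F \ {x | a < g x}, a ∂μ :=
        setLIntegral_mono' (hF.diff hm) fun x hx => not_lt.1 hx.2
    _ ≤ a * μ F := by rw [setLIntegral_const]; gcongr; exact sdiff_subset

theorem exists_closedBall_half_subset_inter {E : Type*} [SeminormedAddCommGroup E]
    [NormedSpace ℝ E] {c x : E} {H r : ℝ} (hx : x ∈ closedBall c H) (hr : 0 < r)
    (hrH : r ≤ 2 * H) : ∃ z, closedBall z (r / 2) ⊆ closedBall x r ∩ closedBall c H := by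
  have hH : 0 < H := by linarith
  rw [mem_closedBall, dist_eq_norm] at hx
  set s := r / (2 * H)
  have hs0 : 0 ≤ s := by positivity
  have hs1 : s ≤ 1 := (div_le_one (by positivity)).2 hrH
  have hsH : s * H = r / 2 := by simp only [s]; field_simp
  refine ⟨x + s • (c - x), subset_inter (closedBall_subset_closedBall' ?_)
    (closedBall_subset_closedBall' ?_)⟩
  · rw [dist_eq_norm, add_sub_cancel_left, norm_smul, Real.norm_of_nonneg hs0, norm_sub_rev]
    nlinarith
  · rw [dist_eq_norm, show x + s • (c - x) - c = (1 - s) • (x - c) by module, norm_smul,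
      Real.norm_of_nonneg (by linarith)]
    nlinarith

theorem essInf_restrict_ne_top {X : Type*} [MeasurableSpace X] {μ : Measure X} {s : Set X}
    (hs : μ s ≠ 0) {g : X → ℝ≥0∞} (hg : ∀ x, g x ≠ ⊤) : essInf g (μ.restrict s) ≠ ⊤ := by
  have : (ae (μ.restrict s)).NeBot := ae_neBot.2 (Measure.restrict_eq_zero.not.2 hs)
  obtain ⟨y, hy⟩ := (ae_essInf_le (f := g) (μ := μ.restrict s)).exists
  exact (hy.trans_lt (hg y).lt_top).ne

section A1OnBalls

variable {X : Type*} [PseudoMetricSpace X] [MeasurableSpace X]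

/-- The Muckenhoupt condition `A₁(μ)` for the weight `g` with constant `C`, tested on balls. -/
def A1OnBalls (μ : Measure X) (g : X → ℝ≥0∞) (C : ℝ≥0) : Prop :=
  ∀ x r, 0 < r → μ.withDensity g (closedBall x r) ≤
    C * μ (closedBall x r) * essInf g (μ.restrict (closedBall x r))

variable {μ : Measure X} {g : X → ℝ≥0∞} {C : ℝ≥0}

theorem A1OnBalls.ae_withDensity_closedBall_le (h : A1OnBalls μ g C) (x : X) {r : ℝ}
    (hr : 0 < r) : ∀ᵐ y ∂μ.restrict (closedBall x r),
      μ.withDensity g (closedBall x r) ≤ C * μ (closedBall x r) * g y := by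
  filter_upwards [ae_essInf_le (f := g) (μ := μ.restrict (closedBall x r))] with y hy
  exact (h x r hr).trans (by gcongr)

theorem A1OnBalls.withDensity_mul_measure_le (h : A1OnBalls μ g C) (hg : Measurable g) {x : X}
    {r : ℝ} (hr : 0 < r) {F : Set X} (hF : MeasurableSet F) (hFB : F ⊆ closedBall x r) :
    μ.withDensity g (closedBall x r) * μ F ≤ C * μ (closedBall x r) * μ.withDensity g F := calc
  _ = ∫⁻ _ in F, μ.withDensity g (closedBall x r) ∂μ := (setLIntegral_const ..).symm
  _ ≤ ∫⁻ y in F, C * μ (closedBall x r) * g y ∂μ :=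
      lintegral_mono_ae
        (ae_restrict_of_ae_restrict_of_subset hFB (h.ae_withDensity_closedBall_le x hr))
  _ = C * μ (closedBall x r) * μ.withDensity g F := by
      rw [lintegral_const_mul _ hg, withDensity_apply _ hF]

theorem A1OnBalls.isFiniteMeasureOnCompacts_withDensity [ProperSpace X]
    [IsFiniteMeasureOnCompacts μ] [μ.IsOpenPosMeasure] (h : A1OnBalls μ g C)
    (hg : ∀ x, g x ≠ ⊤) : IsFiniteMeasureOnCompacts (μ.withDensity g) := by
  refine ⟨fun K hK => ?_⟩
  rcases K.eq_empty_or_nonempty with rfl | ⟨x, -⟩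
  · simp
  obtain ⟨r, hr, hKr⟩ := hK.isBounded.subset_closedBall_lt 0 x
  refine (measure_mono hKr).trans_lt ((h x r hr).trans_lt ?_)
  have := essInf_restrict_ne_top (measure_closedBall_pos μ x hr).ne' hg
  have := (measure_closedBall_lt_top (μ := μ) (x := x) (r := r)).ne
  finiteness

theorem A1OnBalls.ainftyOnBalls_withDensity [ProperSpace X] (h : A1OnBalls μ g C)
    (hg : Measurable g) [IsFiniteMeasureOnCompacts (μ.withDensity g)]
    [(μ.withDensity g).IsOpenPosMeasure] : AinftyOnBalls μ (μ.withDensity g) := by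
  refine ⟨C, 1, one_pos, fun x r hr F hFB hF => ?_⟩
  set ν := μ.withDensity g
  have hν0 : ν (closedBall x r) ≠ 0 := (measure_closedBall_pos ν x hr).ne'
  have hνt : ν (closedBall x r) ≠ ⊤ := measure_closedBall_lt_top.ne
  calc μ F ≤ C * μ (closedBall x r) * ν F / ν (closedBall x r) := by
        rw [ENNReal.le_div_iff_mul_le (.inl hν0) (.inl hνt), mul_comm]
        exact h.withDensity_mul_measure_le hg hr hF hFB
    _ = C * (ν F / ν (closedBall x r)) ^ (1 : ℝ) * μ (closedBall x r) := by
        rw [ENNReal.rpow_one, mul_div_assoc]; ring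

/-- The multilinear condition `A_{(1,…,1)}(μ)` with constant `C`, tested on balls and stated for
the `m`-th roots `σ i` of the weights, so that no outer power appears. -/
def MultiA1OnBalls {ι : Type*} [Fintype ι] (μ : Measure X) (σ : ι → X → ℝ≥0∞) (C : ℝ≥0) : Prop :=
  ∀ x r, 0 < r → μ.withDensity (∏ i, σ i) (closedBall x r) ≤
    C * μ (closedBall x r) * ∏ i, essInf (σ i) (μ.restrict (closedBall x r))

theorem MultiA1OnBalls.a1OnBalls {ι : Type*} [Fintype ι] {σ : ι → X → ℝ≥0∞}
    (h : MultiA1OnBalls μ σ C) : A1OnBalls μ (∏ i, σ i) C := by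
  refine fun x r hr => (h x r hr).trans ?_
  gcongr
  refine le_essInf_of_ae_le _ ?_
  filter_upwards [eventually_countable_forall.2 fun i => ae_essInf_le (f := σ i)
    (μ := μ.restrict (closedBall x r))] with y hy
  rw [Finset.prod_apply]
  exact Finset.prod_le_prod' fun i _ => hy i

end A1OnBalls

section A1Ainfty

/-- A radius at which the `μ`-average of `ν` over balls about `x` is above level `a`, but no longer
so after doubling: the Calderón–Zygmund selection rule for the level `a`. -/
def IsStoppingRadius {X : Type*} [PseudoMetricSpace X] [MeasurableSpace X] (ν μ : Measure X)
    (a : ℝ≥0∞) (x : X) (r : ℝ) : Prop :=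
  0 < r ∧ a * μ (closedBall x r) < ν (closedBall x r) ∧
    ν (closedBall x (2 * r)) ≤ a * μ (closedBall x (2 * r))

variable {E : Type*} [NormedAddCommGroup E] [NormedSpace ℝ E] [FiniteDimensional ℝ E]
  [MeasurableSpace E] [BorelSpace E] {μ : Measure E} [μ.IsAddHaarMeasure] {g : E → ℝ≥0∞}
  {C : ℝ≥0}

theorem A1OnBalls.ae_exists_isStoppingRadius (h : A1OnBalls μ g C) (hg : Measurable g)
    [IsFiniteMeasureOnCompacts (μ.withDensity g)] {c : E} {H : ℝ} (hH : 0 < H) {l : ℝ≥0∞}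
    (hl : μ.withDensity g (closedBall c H) ≤ l * μ (closedBall c H)) :
    ∀ᵐ x ∂μ, x ∈ closedBall c H → C * l < g x → ∃ r ≤ 2 * H,
      IsStoppingRadius (μ.withDensity g) μ (C * l) x r := by
  set ν := μ.withDensity g
  filter_upwards [Besicovitch.ae_tendsto_rnDeriv ν μ, Measure.rnDeriv_withDensity μ hg]
    with x hlim hrn hx hgx
  rw [hrn] at hlim
  have hsmall : ∀ᶠ r in 𝓝[>] (0 : ℝ), C * l * μ (closedBall x r) < ν (closedBall x r) := by
    filter_upwards [hlim.eventually_const_lt hgx, self_mem_nhdsWithin] with r hr hr0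
    exact (ENNReal.lt_div_iff_mul_lt (.inl (measure_closedBall_pos μ x hr0).ne')
      (.inl measure_closedBall_lt_top.ne)).1 hr
  have hlarge : ν (closedBall x (4 * H)) ≤ C * l * μ (closedBall x (4 * H)) := by
    refine (ENNReal.mul_le_mul_iff_left (measure_closedBall_pos μ c hH).ne'
      measure_closedBall_lt_top.ne).1 ?_
    have hsub : closedBall c H ⊆ closedBall x (4 * H) := by
      refine closedBall_subset_closedBall' ?_
      rw [mem_closedBall'] at hx
      linarith
    calc ν (closedBall x (4 * H)) * μ (closedBall c H)
        ≤ C * μ (closedBall x (4 * H)) * ν (closedBall c H) :=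
          h.withDensity_mul_measure_le hg (by positivity) measurableSet_closedBall hsub
      _ ≤ C * μ (closedBall x (4 * H)) * (l * μ (closedBall c H)) := by gcongr
      _ = C * l * μ (closedBall x (4 * H)) * μ (closedBall c H) := by ring
  obtain ⟨r, hr, hrH, hlt, hle⟩ := exists_and_not_two_mul (by positivity) hlarge.not_gt hsmall
  exact ⟨r, by linarith, hr, hlt, not_lt.1 hle⟩

theorem A1OnBalls.withDensity_closedBall_five_mul_le (h : A1OnBalls μ g C) (hg : Measurable g)
    {c x : E} {H r : ℝ} (hx : x ∈ closedBall c H) (hrH : r ≤ 2 * H) {l : ℝ≥0∞}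
    (hr : IsStoppingRadius (μ.withDensity g) μ (C * l) x r) :
    μ.withDensity g (closedBall x (5 * r)) ≤ (C ^ 2 * 10 ^ Module.finrank ℝ E : ℝ≥0) * l *
      μ (closedBall x r ∩ (closedBall c H ∩ {y | l < g y})) := by
  obtain ⟨hr, hlt, hle⟩ := hr
  set ν := μ.withDensity g
  obtain ⟨z, hz⟩ := exists_closedBall_half_subset_inter hx hr hrH
  have hhalf : μ (closedBall z (r / 2)) ≤
      μ (closedBall x r ∩ (closedBall c H ∩ {y | l < g y})) := by
    refine measure_mono_ae ?_
    filter_upwards [(ae_restrict_iff' measurableSet_closedBall).1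
      (h.ae_withDensity_closedBall_le x hr)] with y hy hyz
    refine ⟨(hz hyz).1, (hz hyz).2, show l < g y from not_le.1 fun hgy => ?_⟩
    refine (hlt.trans_le (hy (hz hyz).1)).not_ge ?_
    rw [mul_right_comm]
    gcongr
  have hten : μ (closedBall x (5 * r)) = 10 ^ Module.finrank ℝ E * μ (closedBall z (r / 2)) := by
    rw [show 5 * r = 10 * (r / 2) by ring, Measure.addHaar_closedBall_mul_of_pos μ x (by norm_num),
      Measure.addHaar_closedBall_center μ z, ENNReal.ofReal_pow (by norm_num)]
    norm_num
  refine (ENNReal.mul_le_mul_iff_left (measure_closedBall_pos μ x (by positivity : 0 < 2 * r)).ne'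
    measure_closedBall_lt_top.ne).1 ?_
  calc ν (closedBall x (5 * r)) * μ (closedBall x (2 * r))
      ≤ C * μ (closedBall x (5 * r)) * ν (closedBall x (2 * r)) :=
        h.withDensity_mul_measure_le hg (by positivity) measurableSet_closedBall
          (closedBall_subset_closedBall (by linarith))
    _ ≤ C * (10 ^ Module.finrank ℝ E * μ (closedBall x r ∩ (closedBall c H ∩ {y | l < g y}))) *
          (C * l * μ (closedBall x (2 * r))) := by rw [hten]; gcongr
    _ = _ := by push_cast; ring

theorem A1OnBalls.withDensity_lt_le (h : A1OnBalls μ g C) (hg : Measurable g)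
    [IsFiniteMeasureOnCompacts (μ.withDensity g)] {c : E} {H : ℝ} (hH : 0 < H) {l : ℝ≥0∞}
    (hl : μ.withDensity g (closedBall c H) ≤ l * μ (closedBall c H)) :
    μ.withDensity g (closedBall c H ∩ {x | C * l < g x}) ≤
      (C ^ 2 * 10 ^ Module.finrank ℝ E : ℝ≥0) * l * μ (closedBall c H ∩ {x | l < g x}) := by
  set ν := μ.withDensity g
  set G := closedBall c H ∩ {x | l < g x}
  set t := {x ∈ closedBall c H | ∃ r ≤ 2 * H, IsStoppingRadius ν μ (C * l) x r}
  have hex : ∀ x ∈ t, ∃ r ≤ 2 * H, IsStoppingRadius ν μ (C * l) x r := fun x hx => hx.2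
  choose! r hrH hr using hex
  obtain ⟨U, hUt, hUd, hUc⟩ := Vitali.exists_disjoint_subfamily_covering_enlargement_closedBall
    t (fun x => x) r (2 * H) hrH 5 (by norm_num)
  have hU : U.Countable := hUd.countable_of_nonempty_interior fun x hx =>
    ⟨x, mem_interior_iff_mem_nhds.2 (closedBall_mem_nhds _ (hr x (hUt hx)).1)⟩
  have hG : MeasurableSet G := measurableSet_closedBall.inter (measurableSet_lt (by fun_prop) hg)
  have hcover : ∀ᵐ x ∂ν, x ∈ closedBall c H ∩ {x | C * l < g x} →
      x ∈ ⋃ y ∈ U, closedBall y (5 * r y) := by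
    filter_upwards [(withDensity_absolutelyContinuous μ g).ae_le
      (h.ae_exists_isStoppingRadius hg hH hl)] with x hx hxs
    have hxt : x ∈ t := ⟨hxs.1, hx hxs.1 hxs.2⟩
    obtain ⟨y, hyU, hy⟩ := hUc x hxt
    exact mem_biUnion hyU (hy (mem_closedBall_self (hr x hxt).1.le))
  calc ν (closedBall c H ∩ {x | C * l < g x})
      ≤ ν (⋃ y ∈ U, closedBall y (5 * r y)) := measure_mono_ae hcover
    _ ≤ ∑' y : U, ν (closedBall y.1 (5 * r y)) := measure_biUnion_le _ hU _
    _ ≤ ∑' y : U, (C ^ 2 * 10 ^ Module.finrank ℝ E : ℝ≥0) * l * μ (closedBall y.1 (r y) ∩ G) := by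
        exact ENNReal.tsum_le_tsum fun y => h.withDensity_closedBall_five_mul_le hg
          (hUt y.2).1 (hrH y (hUt y.2)) (hr y (hUt y.2))
    _ = (C ^ 2 * 10 ^ Module.finrank ℝ E : ℝ≥0) * l * μ (⋃ y ∈ U, closedBall y (r y) ∩ G) := by
        rw [ENNReal.tsum_mul_left, measure_biUnion hU
          (fun a ha b hb hab => (hUd ha hb hab).mono inter_subset_left inter_subset_left)
          fun y _ => measurableSet_closedBall.inter hG]
    _ ≤ _ := by gcongr; exact iUnion₂_subset fun _ _ => inter_subset_right

theorem A1OnBalls.exists_withDensity_lt_le_mul (h : A1OnBalls μ g C) (hg : Measurable g)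
    [IsFiniteMeasureOnCompacts (μ.withDensity g)] :
    ∃ N : ℝ≥0, 1 < N ∧ ∀ c H, 0 < H → ∀ l,
      μ.withDensity g (closedBall c H) ≤ l * μ (closedBall c H) →
      μ.withDensity g (closedBall c H ∩ {x | N * l < g x}) ≤
        (N / (N + 1) : ℝ≥0) * μ.withDensity g (closedBall c H ∩ {x | l < g x}) := by
  set K : ℝ≥0 := C ^ 2 * 10 ^ Module.finrank ℝ E
  set N : ℝ≥0 := 2 * K + C + 2
  have hN1 : 1 < N := one_lt_two.trans_le le_add_self
  refine ⟨N, hN1, fun c H hH l hl => ?_⟩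
  set ν := μ.withDensity g
  set A := closedBall c H ∩ {x | l < g x}
  set B := closedBall c H ∩ {x | N * l < g x}
  have hmeas (a : ℝ≥0∞) : MeasurableSet (closedBall c H ∩ {x | a < g x}) :=
    measurableSet_closedBall.inter (measurableSet_lt measurable_const hg)
  have hBA : B ⊆ A := inter_subset_inter_right _ fun x hx =>
    (le_mul_of_one_le_left' (mod_cast hN1.le : (1 : ℝ≥0∞) ≤ N)).trans_lt hx
  have hBt : ν B ≠ ⊤ := ((measure_mono inter_subset_left).trans_lt measure_closedBall_lt_top).ne
  have hsplit (ρ : Measure E) : ρ (A \ B) + ρ B = ρ A := by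
    conv_rhs => rw [← measure_sdiff_add_inter A (hmeas (N * l)), inter_eq_right.2 hBA]
  have hCN : (C : ℝ≥0∞) ≤ N := mod_cast le_add_right le_add_self
  have hKN : (2 * K : ℝ≥0∞) ≤ N := mod_cast le_add_right le_self_add
  have hlevel {a : ℝ≥0∞} {F : Set E} (hF : MeasurableSet F) (haF : ∀ x ∈ F, a < g x) :
      a * μ F ≤ ν F := by
    rw [withDensity_apply _ hF, ← setLIntegral_const]
    exact setLIntegral_mono' hF fun x hx => (haF x hx).le
  have hdiff : 2 * ν B ≤ N * ν (A \ B) + ν B := calc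
    2 * ν B ≤ 2 * (K * l * μ A) := by
        refine mul_le_mul_right (le_trans (measure_mono ?_) (h.withDensity_lt_le hg hH hl)) _
        exact inter_subset_inter_right _ fun x (hx : N * l < g x) =>
          show C * l < g x from lt_of_le_of_lt (by gcongr) hx
    _ = 2 * K * (l * μ (A \ B)) + 2 * K * l * μ B := by rw [← hsplit μ]; ring
    _ ≤ N * ν (A \ B) + N * l * μ B := by
        gcongr
        exact hlevel ((hmeas l).diff (hmeas _)) fun x hx => hx.1.2
    _ ≤ N * ν (A \ B) + ν B := by
        gcongr
        exact hlevel (hmeas _) fun x hx => hx.2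
  have hB : ν B ≤ N * ν (A \ B) :=
    (ENNReal.add_le_add_iff_right hBt).1 (by rwa [← two_mul])
  rw [ENNReal.coe_div (by positivity), ← ENNReal.mul_div_right_comm,
    ENNReal.le_div_iff_mul_le (by simp) (by simp)]
  calc ν B * (N + 1 : ℝ≥0) = N * ν B + ν B := by push_cast; ring
    _ ≤ N * ν B + N * ν (A \ B) := by gcongr
    _ = N * ν A := by rw [← hsplit ν]; ring

theorem A1OnBalls.exists_withDensity_le_pow_add (h : A1OnBalls μ g C) (hg : Measurable g)
    [IsFiniteMeasureOnCompacts (μ.withDensity g)] :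
    ∃ θ N : ℝ≥0, 0 < θ ∧ θ < 1 ∧ 1 ≤ N ∧ ∀ c H, 0 < H → ∀ F ⊆ closedBall c H, MeasurableSet F →
      ∀ i : ℕ, μ.withDensity g F ≤
        (θ ^ i + N ^ i * (μ F / μ (closedBall c H))) * μ.withDensity g (closedBall c H) := by
  obtain ⟨N, hN, hlevel⟩ := h.exists_withDensity_lt_le_mul hg
  set θ := N / (N + 1)
  refine ⟨θ, N, by positivity, (div_lt_one (by positivity)).2 (lt_add_one N), hN.le,
    fun c H hH F hFB hF i => ?_⟩
  set ν := μ.withDensity g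
  set B := closedBall c H
  have hB0 : μ B ≠ 0 := (measure_closedBall_pos μ c hH).ne'
  have hBt : μ B ≠ ⊤ := measure_closedBall_lt_top.ne
  have hdecay : ∀ i : ℕ, ν (B ∩ {x | N ^ i * (ν B / μ B) < g x}) ≤ θ ^ i * ν B := by
    intro i
    induction i with
    | zero => simpa using measure_mono inter_subset_left
    | succ i ih =>
      have hav : ν B ≤ N ^ i * (ν B / μ B) * μ B := by
        rw [mul_assoc, ENNReal.div_mul_cancel hB0 hBt]
        exact le_mul_of_one_le_left' (one_le_pow₀ (mod_cast hN.le))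
      calc ν (B ∩ {x | N ^ (i + 1) * (ν B / μ B) < g x})
          ≤ θ * ν (B ∩ {x | N ^ i * (ν B / μ B) < g x}) := by
            simpa only [pow_succ', mul_assoc] using hlevel c H hH _ hav
        _ ≤ θ * (θ ^ i * ν B) := by gcongr
        _ = θ ^ (i + 1) * ν B := by ring
  calc ν F ≤ ν (F ∩ {x | N ^ i * (ν B / μ B) < g x}) + N ^ i * (ν B / μ B) * μ F :=
        withDensity_le_add hg _ hF
    _ ≤ θ ^ i * ν B + N ^ i * (ν B / μ B) * μ F := by
        gcongr
        exact (measure_mono (inter_subset_inter_left _ hFB)).trans (hdecay i)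
    _ = (θ ^ i + N ^ i * (μ F / μ B)) * ν B := by simp only [div_eq_mul_inv]; ring

theorem A1OnBalls.withDensity_ainftyOnBalls (h : A1OnBalls μ g C) (hg : Measurable g)
    [IsFiniteMeasureOnCompacts (μ.withDensity g)] : AinftyOnBalls (μ.withDensity g) μ := by
  obtain ⟨θ, N, hθ0, hθ1, hN, hle⟩ := h.exists_withDensity_le_pow_add hg
  obtain ⟨δ, hδ, hpow⟩ := exists_pow_add_pow_mul_le_mul_rpow (θ := θ) (N := N) hθ0 hθ1 hN
  refine ⟨2 / θ, δ, hδ, fun x r hr F hFB hF => ?_⟩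
  set B := closedBall x r
  rcases eq_or_ne (μ F) 0 with hF0 | hF0
  · simp [withDensity_absolutelyContinuous μ g hF0]
  have hB0 : μ B ≠ 0 := (measure_closedBall_pos μ x hr).ne'
  have hBt : μ B ≠ ⊤ := measure_closedBall_lt_top.ne
  have hFt : μ F ≠ ⊤ := ((measure_mono hFB).trans_lt measure_closedBall_lt_top).ne
  have ht0 : μ F / μ B ≠ 0 := ENNReal.div_ne_zero.2 ⟨hF0, hBt⟩
  have ht1 : μ F / μ B ≤ 1 := ENNReal.div_le_of_le_mul (by rw [one_mul]; exact measure_mono hFB)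
  have hFi : ∀ i : ℕ, μ.withDensity g F ≤
      (θ ^ i + N ^ i * (μ F / μ B)) * μ.withDensity g B := hle x r hr F hFB hF
  lift μ F / μ B to ℝ≥0 using ENNReal.div_ne_top hFt hB0 with t
  obtain ⟨i, hi⟩ := hpow t (NNReal.coe_pos.2 (pos_iff_ne_zero.2 (mod_cast ht0))) (mod_cast ht1)
  refine (hFi i).trans (mul_le_mul_left ?_ _)
  rw [← ENNReal.coe_rpow_of_nonneg _ hδ.le]
  exact_mod_cast hi

end A1Ainfty

section Doubling

variable {E : Type*} [NormedAddCommGroup E] [NormedSpace ℝ E] [FiniteDimensional ℝ E]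
  [MeasurableSpace E] [BorelSpace E] {μ : Measure E} [μ.IsAddHaarMeasure] {ν : Measure E}

theorem AinftyOnBalls.exists_measure_closedBall_three_mul_le (h : AinftyOnBalls μ ν) :
    ∃ D : ℝ≥0, ∀ x r, 0 < r → ν (closedBall x (3 * r)) ≤ D * ν (closedBall x r) := by
  obtain ⟨D, hD⟩ := h.exists_measure_closedBall_le (3 ^ Module.finrank ℝ E)
  refine ⟨D, fun x r hr => hD x _ (by positivity) _ (closedBall_subset_closedBall (by linarith))
    measurableSet_closedBall ?_⟩
  rw [Measure.addHaar_closedBall_mul_of_pos μ x (by norm_num),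
    Measure.addHaar_closedBall_center μ x, ENNReal.ofReal_pow (by norm_num)]
  norm_num

theorem AinftyOnBalls.exists_measure_closedBall_le_three_mul [Nontrivial E]
    (h : AinftyOnBalls μ ν) :
    ∃ η : ℝ≥0, η < 1 ∧ ∀ x r, 0 < r → ν (closedBall x r) ≤ η * ν (closedBall x (3 * r)) := by
  obtain ⟨A, hA⟩ := h.exists_measure_closedBall_le 2
  refine ⟨A / (A + 1), (div_lt_one (by positivity)).2 (lt_add_one A), fun x r hr => ?_⟩
  have hsub : closedBall x r ⊆ closedBall x (3 * r) := closedBall_subset_closedBall (by linarith)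
  have hsplit (ρ : Measure E) : ρ (closedBall x (3 * r) \ closedBall x r) + ρ (closedBall x r) =
      ρ (closedBall x (3 * r)) := by
    conv_rhs => rw [← measure_sdiff_add_inter _ measurableSet_closedBall, inter_eq_right.2 hsub]
  have hthree : 2 * μ (closedBall x r) ≤ μ (closedBall x (3 * r)) := by
    rw [Measure.addHaar_closedBall_mul_of_pos μ x (by norm_num),
      Measure.addHaar_closedBall_center μ x]
    gcongr
    refine ENNReal.le_ofReal_iff_toReal_le (by simp) (by positivity) |>.2 ?_
    calc (2 : ℝ≥0∞).toReal ≤ 3 ^ 1 := by norm_num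
      _ ≤ 3 ^ Module.finrank ℝ E := pow_le_pow_right₀ (by norm_num) Module.finrank_pos
  have hannulus : μ (closedBall x r) ≤ μ (closedBall x (3 * r) \ closedBall x r) := by
    rw [two_mul, ← hsplit μ] at hthree
    exact (ENNReal.add_le_add_iff_right measure_closedBall_lt_top.ne).1 hthree
  have hν := hA x (3 * r) (by positivity) _ sdiff_subset
    (measurableSet_closedBall.diff measurableSet_closedBall) (by
      rw [← hsplit μ, ENNReal.coe_ofNat, two_mul]; gcongr)
  rw [ENNReal.coe_div (by positivity), ← ENNReal.mul_div_right_comm,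
    ENNReal.le_div_iff_mul_le (by simp) (by simp)]
  calc ν (closedBall x r) * (A + 1 : ℝ≥0)
      = A * ν (closedBall x r) + ν (closedBall x r) := by push_cast; ring
    _ ≤ A * ν (closedBall x r) + A * ν (closedBall x (3 * r) \ closedBall x r) := by
        gcongr; exact (measure_mono hsub).trans hν
    _ = A * ν (closedBall x (3 * r)) := by rw [← hsplit ν]; ring

end Doubling

theorem measure_rpow_le_lintegral_mul_lintegral_rpow {X : Type*} [MeasurableSpace X]
    {μ : Measure X} {g : X → ℝ≥0∞} (hg : AEMeasurable g μ) (hgt : ∀ᵐ x ∂μ, g x ≠ ⊤)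
    (hg0 : ∀ᵐ x ∂μ, g x ≠ 0) {p : ℝ} (hp : 1 < p) :
    μ univ ^ p ≤ (∫⁻ x, g x ∂μ) * (∫⁻ x, g x ^ (1 - p / (p - 1)) ∂μ) ^ (p - 1) := by
  have hp0 : 0 < p := by linarith
  have hp1 : p - 1 ≠ 0 := by linarith
  have hone : μ univ = ∫⁻ x, g x ^ p⁻¹ * g x ^ (-p⁻¹) ∂μ := by
    rw [← lintegral_one]
    refine lintegral_congr_ae ?_
    filter_upwards [hgt, hg0] with x hxt hx0
    rw [← ENNReal.rpow_add _ _ hx0 hxt, add_neg_cancel, ENNReal.rpow_zero]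
  have hexp : -p⁻¹ * (p / (p - 1)) = 1 - p / (p - 1) := by field_simp; ring
  calc μ univ ^ p ≤ ((∫⁻ x, (g x ^ p⁻¹) ^ p ∂μ) ^ (1 / p) *
          (∫⁻ x, (g x ^ (-p⁻¹)) ^ (p / (p - 1)) ∂μ) ^ (1 / (p / (p - 1)))) ^ p := by
        rw [hone]
        gcongr
        exact ENNReal.lintegral_mul_le_Lp_mul_Lq μ (Real.HolderConjugate.conjExponent hp)
          (hg.pow_const _) (hg.pow_const _)
    _ = (∫⁻ x, g x ∂μ) * (∫⁻ x, g x ^ (1 - p / (p - 1)) ∂μ) ^ (p - 1) := by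
        simp only [ENNReal.mul_rpow_of_nonneg _ _ hp0.le, ← ENNReal.rpow_mul, hexp]
        simp only [one_div, inv_mul_cancel₀ hp0.ne', ENNReal.rpow_one, inv_div,
          div_mul_cancel₀ _ hp0.ne']

section ApOnBalls

variable {X : Type*} [PseudoMetricSpace X] [MeasurableSpace X]

/-- The Muckenhoupt condition `A_p(μ)` for the weight `g` with constant `C`, tested on balls and
multiplied out to avoid averages. -/
def ApOnBalls (μ : Measure X) (g : X → ℝ≥0∞) (p : ℝ) (C : ℝ≥0) : Prop :=
  ∀ x r, 0 < r → μ.withDensity g (closedBall x r) *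
    (∫⁻ y in closedBall x r, g y ^ (1 - p / (p - 1)) ∂μ) ^ (p - 1) ≤ C * μ (closedBall x r) ^ p

variable [ProperSpace X] {μ : Measure X} {g : X → ℝ≥0∞} {p : ℝ} {C : ℝ≥0}

theorem ApOnBalls.isFiniteMeasureOnCompacts_withDensity [IsFiniteMeasureOnCompacts μ]
    [μ.IsOpenPosMeasure] (h : ApOnBalls μ g p C) (hp : 1 < p) (hg : Measurable g)
    (hgt : ∀ x, g x ≠ ⊤) : IsFiniteMeasureOnCompacts (μ.withDensity g) := by
  refine ⟨fun K hK => ?_⟩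
  rcases K.eq_empty_or_nonempty with rfl | ⟨x, -⟩
  · simp
  obtain ⟨r, hr, hKr⟩ := hK.isBounded.subset_closedBall_lt 0 x
  refine (measure_mono hKr).trans_lt ?_
  have hdual : ∫⁻ y in closedBall x r, g y ^ (1 - p / (p - 1)) ∂μ ≠ 0 := by
    rw [Ne, lintegral_eq_zero_iff (hg.pow_const _)]
    intro h0
    have : (ae (μ.restrict (closedBall x r))).NeBot :=
      ae_neBot.2 (Measure.restrict_eq_zero.not.2 (measure_closedBall_pos μ x hr).ne')
    have hneg : 1 - p / (p - 1) < 0 := by rw [sub_neg, one_lt_div] <;> linarith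
    obtain ⟨y, hy⟩ := h0.exists
    rcases ENNReal.rpow_eq_zero_iff.1 hy with ⟨-, hpos⟩ | ⟨hy, -⟩
    exacts [hneg.not_gt hpos, hgt y hy]
  refine ENNReal.lt_top_of_mul_ne_top_left ((h x r hr).trans_lt ?_).ne
    (ENNReal.rpow_pos_of_nonneg hdual.bot_lt (by linarith)).ne'
  exact ENNReal.mul_lt_top (by simp)
    (ENNReal.rpow_lt_top_of_nonneg (by linarith) measure_closedBall_lt_top.ne)

theorem ApOnBalls.ainftyOnBalls_withDensity (h : ApOnBalls μ g p C) (hp : 1 < p)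
    (hg : Measurable g) (hgt : ∀ x, g x ≠ ⊤) (hg0 : ∀ᵐ x ∂μ, g x ≠ 0)
    [IsFiniteMeasureOnCompacts (μ.withDensity g)] [(μ.withDensity g).IsOpenPosMeasure] :
    AinftyOnBalls μ (μ.withDensity g) := by
  have hp0 : 0 < p := by linarith
  refine ⟨C ^ p⁻¹, p⁻¹, by positivity, fun x r hr F hFB hF => ?_⟩
  set w := μ.withDensity g
  set B := closedBall x r
  have hw0 : w B ≠ 0 := (measure_closedBall_pos w x hr).ne'
  have hwt : w B ≠ ⊤ := measure_closedBall_lt_top.ne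
  have hpow : μ F ^ p * w B ≤ C * w F * μ B ^ p := calc
    μ F ^ p * w B ≤ w F * (∫⁻ y in B, g y ^ (1 - p / (p - 1)) ∂μ) ^ (p - 1) * w B := by
        gcongr
        have := measure_rpow_le_lintegral_mul_lintegral_rpow (μ := μ.restrict F)
          hg.aemeasurable (.of_forall hgt) (ae_restrict_of_ae hg0) hp
        rw [Measure.restrict_apply_univ, ← withDensity_apply _ hF] at this
        refine this.trans ?_
        gcongr
    _ = w F * (w B * (∫⁻ y in B, g y ^ (1 - p / (p - 1)) ∂μ) ^ (p - 1)) := by ring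
    _ ≤ w F * (C * μ B ^ p) := mul_le_mul_right (h x r hr) _
    _ = C * w F * μ B ^ p := by ring
  rw [← ENNReal.rpow_le_rpow_iff hp0]
  calc μ F ^ p ≤ C * w F * μ B ^ p / w B := (ENNReal.le_div_iff_mul_le (.inl hw0) (.inl hwt)).2 hpow
    _ = (↑(C ^ p⁻¹) * (w F / w B) ^ p⁻¹ * μ B) ^ p := by
        rw [ENNReal.mul_rpow_of_nonneg _ _ hp0.le, ENNReal.mul_rpow_of_nonneg _ _ hp0.le,
          ENNReal.rpow_inv_rpow hp0.ne', ← ENNReal.coe_rpow_of_nonneg _ hp0.le,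
          NNReal.rpow_inv_rpow hp0.ne']
        simp only [div_eq_mul_inv]
        ring

end ApOnBalls

theorem essInf_rpow_le_essInf {X : Type*} [MeasurableSpace X] {μ : Measure X} {g : X → ℝ≥0∞}
    {s : ℝ} (hs : 0 ≤ s) : essInf g μ ^ s ≤ essInf (fun x => g x ^ s) μ :=
  le_essInf_of_ae_le _ <| by
    filter_upwards [ae_essInf_le (f := g) (μ := μ)] with x hx
    gcongr

theorem le_rpow_inv_mul_prod_rpow_inv {ι : Type*} [Fintype ι] {s : ℝ} (hs : 0 < s) {a A : ℝ≥0∞}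
    (hA : A ≠ ⊤) {b : ι → ℝ≥0∞} (hb : ∀ i, b i ≠ ⊤) (h : a ^ s * ∏ i, (b i)⁻¹ ≤ A) :
    a ≤ A ^ s⁻¹ * ∏ i, b i ^ s⁻¹ := by
  rw [← ENNReal.prod_inv_distrib fun i _ j _ _ => .inr (hb j), ← div_eq_mul_inv,
    ENNReal.div_le_iff_le_mul (.inr hA) (.inl (ENNReal.prod_ne_top fun i _ => hb i)),
    ← ENNReal.le_rpow_inv_iff hs] at h
  rwa [ENNReal.mul_rpow_of_nonneg _ _ (by positivity),
    ← ENNReal.prod_rpow_of_nonneg (by positivity)] at h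

section Cubes

variable {n m : ℕ}

theorem exists_isCube_superset_closedBall (n : ℕ) : ∃ κ : ℝ≥0, ∀ (x : ESp n) (r : ℝ), 0 < r →
    ∃ Q, IsCube Q ∧ volume Q ≠ 0 ∧ volume Q ≠ ⊤ ∧ closedBall x r ⊆ Q ∧
      volume Q ≤ κ * volume (closedBall x r) := by
  refine ⟨(√n ^ n).toNNReal, fun x r hr => ?_⟩
  suffices h : closedBall x r ⊆ {y | ∀ i, x i - r ≤ y i ∧ y i ≤ x i - r + 2 * r} ∧
      volume {y : ESp n | ∀ i, x i - r ≤ y i ∧ y i ≤ x i - r + 2 * r} ≤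
        (√n ^ n).toNNReal * volume (closedBall x r) from
    ⟨_, ⟨fun i => x i - r, 2 * r, by positivity, rfl⟩,
      ((measure_closedBall_pos volume x hr).trans_le (measure_mono h.1)).ne',
      (h.2.trans_lt (ENNReal.mul_lt_top (by simp) measure_closedBall_lt_top)).ne, h⟩
  refine ⟨fun y hy i => ?_, ?_⟩
  · have := (PiLp.norm_apply_le (y - x) i).trans (mem_closedBall_iff_norm.1 hy)
    rw [PiLp.sub_apply, Real.norm_eq_abs, abs_le] at this
    constructor <;> linarith
  · have hsub : {y : ESp n | ∀ i, x i - r ≤ y i ∧ y i ≤ x i - r + 2 * r} ⊆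
        closedBall x (√n * r) := by
      intro y hy
      rw [mem_closedBall_iff_norm, EuclideanSpace.norm_eq]
      refine Real.sqrt_le_iff.2 ⟨by positivity, ?_⟩
      calc ∑ i, ‖(y - x) i‖ ^ 2 ≤ ∑ _ : Fin n, r ^ 2 := by
            refine Finset.sum_le_sum fun i _ => ?_
            rw [PiLp.sub_apply, Real.norm_eq_abs, sq_abs]
            have := hy i
            exact sq_le_sq' (by linarith) (by linarith)
        _ = (√n * r) ^ 2 := by simp [mul_pow]
    refine (measure_mono hsub).trans_eq ?_
    rw [Measure.addHaar_closedBall_mul _ _ (by positivity) hr.le, finrank_euclideanSpace_fin,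
      Measure.addHaar_closedBall_center _ x, ENNReal.ofReal]

theorem A11.exists_multiA1OnBalls {w : Fin m → ESp n → ℝ} (hm : 0 < m) (hw : ∀ i x, 0 ≤ w i x)
    (h : A11 w) :
    ∃ C : ℝ≥0, MultiA1OnBalls volume (fun i x => ENNReal.ofReal (w i x ^ (m : ℝ)⁻¹)) C := by
  obtain ⟨A, hA, hQA⟩ := h
  lift A to ℝ≥0 using hA.ne
  obtain ⟨κ, hκ⟩ := exists_isCube_superset_closedBall n
  refine ⟨A ^ (m : ℝ)⁻¹ * κ, fun x r hr => ?_⟩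
  obtain ⟨Q, hQ, hQ0, hQt, hBQ, hvol⟩ := hκ x r hr
  set B := closedBall x r
  set σ := fun i x => ENNReal.ofReal (w i x ^ (m : ℝ)⁻¹)
  set b := fun i => essInf (fun x => ENNReal.ofReal (w i x)) (volume.restrict Q)
  have hσ : (fun i x => ENNReal.ofReal (w i x) ^ (m : ℝ)⁻¹) = σ := by
    ext i x
    exact ENNReal.ofReal_rpow_of_nonneg (hw i x) (by positivity)
  have hbσ (i) : b i ^ (m : ℝ)⁻¹ ≤ essInf (σ i) (volume.restrict B) := by
    refine le_trans ?_
      (essInf_antitone_measure (Measure.restrict_mono_set _ hBQ).absolutelyContinuous)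
    rw [← hσ]
    exact essInf_rpow_le_essInf (by positivity)
  have havg : (volume Q)⁻¹ * ∫⁻ x in Q, (∏ i, σ i) x ≤
      A ^ (m : ℝ)⁻¹ * ∏ i, b i ^ (m : ℝ)⁻¹ := by
    refine le_rpow_inv_mul_prod_rpow_inv (mod_cast hm) ENNReal.coe_ne_top
      (fun i => essInf_restrict_ne_top hQ0 fun _ => ofReal_ne_top) (le_of_eq_of_le ?_ (hQA Q hQ))
    simp [σ, b, Finset.prod_apply,
      ENNReal.ofReal_prod_of_nonneg fun i _ => Real.rpow_nonneg (hw i _) _]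
  calc volume.withDensity (∏ i, σ i) B ≤ ∫⁻ x in Q, (∏ i, σ i) x := by
        rw [withDensity_apply _ measurableSet_closedBall]
        exact lintegral_mono_set hBQ
    _ = volume Q * ((volume Q)⁻¹ * ∫⁻ x in Q, (∏ i, σ i) x) := by
        rw [← mul_assoc, ENNReal.mul_inv_cancel hQ0 hQt, one_mul]
    _ ≤ κ * volume B * (A ^ (m : ℝ)⁻¹ * ∏ i, essInf (σ i) (volume.restrict B)) := by
        refine mul_le_mul' hvol (havg.trans ?_)
        gcongr with i
        exact hbσ i
    _ = _ := by
        rw [ENNReal.coe_mul, ← ENNReal.coe_rpow_of_nonneg _ (by positivity)]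
        ring

theorem IsA1.exists_a1OnBalls {W : ESp n → ℝ} (h : IsA1 W) :
    ∃ C : ℝ≥0, A1OnBalls volume (fun x => ENNReal.ofReal (W x)) C := by
  obtain ⟨A, hA, hQA⟩ := h
  lift A to ℝ≥0 using hA.ne
  obtain ⟨κ, hκ⟩ := exists_isCube_superset_closedBall n
  refine ⟨A * κ, fun x r hr => ?_⟩
  obtain ⟨Q, hQ, hQ0, hQt, hBQ, hvol⟩ := hκ x r hr
  set B := closedBall x r
  set g := fun x => ENNReal.ofReal (W x)
  calc volume.withDensity g B ≤ wMeas W Q := by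
        rw [withDensity_apply _ measurableSet_closedBall]
        exact lintegral_mono_set hBQ
    _ = volume Q * ((volume Q)⁻¹ * wMeas W Q) := by
        rw [← mul_assoc, ENNReal.mul_inv_cancel hQ0 hQt, one_mul]
    _ ≤ κ * volume B * (A * essInf g (volume.restrict B)) := by
        refine mul_le_mul' hvol ((hQA Q hQ).trans ?_)
        gcongr
        exact essInf_antitone_measure (Measure.restrict_mono_set _ hBQ).absolutelyContinuous
    _ = (A * κ : ℝ≥0) * volume B * essInf g (volume.restrict B) := by push_cast; ring

theorem IsAp.exists_apOnBalls {W : ESp n → ℝ} {p : ℝ} (hp : 1 < p) (h : IsAp W p) :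
    ∃ C : ℝ≥0, ApOnBalls volume (fun x => ENNReal.ofReal (W x)) p C := by
  obtain ⟨A, hA, hQA⟩ := h
  lift A to ℝ≥0 using hA.ne
  obtain ⟨κ, hκ⟩ := exists_isCube_superset_closedBall n
  refine ⟨A * κ ^ p, fun x r hr => ?_⟩
  obtain ⟨Q, hQ, hQ0, hQt, hBQ, hvol⟩ := hκ x r hr
  set B := closedBall x r
  set g := fun x => ENNReal.ofReal (W x)
  set S := ∫⁻ y in Q, g y ^ (1 - p / (p - 1))
  have hp0 : 0 < p := by linarith
  have hp1 : 0 ≤ p - 1 := by linarith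
  have hpow : volume Q ^ p = volume Q * volume Q ^ (p - 1) := by
    conv_lhs => rw [show p = 1 + (p - 1) by ring, ENNReal.rpow_add _ _ hQ0 hQt, ENNReal.rpow_one]
  have hcancel (a : ℝ≥0∞) : volume Q * ((volume Q)⁻¹ * a) = a := by
    rw [← mul_assoc, ENNReal.mul_inv_cancel hQ0 hQt, one_mul]
  calc volume.withDensity g B * (∫⁻ y in B, g y ^ (1 - p / (p - 1))) ^ (p - 1)
      ≤ wMeas W Q * S ^ (p - 1) := by
        rw [withDensity_apply _ measurableSet_closedBall]
        exact mul_le_mul' (lintegral_mono_set hBQ)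
          (ENNReal.rpow_le_rpow (lintegral_mono_set hBQ) hp1)
    _ = volume Q ^ p * ((volume Q)⁻¹ * wMeas W Q * ((volume Q)⁻¹ * S) ^ (p - 1)) := by
        rw [hpow, mul_mul_mul_comm, hcancel, ← ENNReal.mul_rpow_of_nonneg _ _ hp1, hcancel]
    _ ≤ (κ * volume B) ^ p * A := by gcongr; exact hQA Q hQ
    _ = (A * κ ^ p : ℝ≥0) * volume B ^ p := by
        rw [ENNReal.mul_rpow_of_nonneg _ _ hp0.le, ENNReal.coe_mul,
          ← ENNReal.coe_rpow_of_nonneg _ hp0.le]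
        ring

theorem IsAinfty.isFiniteMeasureOnCompacts_and_ainftyOnBalls {W : ESp n → ℝ} (hW : Measurable W)
    (hpos : ∀ᵐ x, 0 < W x) (h : IsAinfty W) :
    IsFiniteMeasureOnCompacts (volume.withDensity fun x => ENNReal.ofReal (W x)) ∧
      AinftyOnBalls volume (volume.withDensity fun x => ENNReal.ofReal (W x)) := by
  set g := fun x => ENNReal.ofReal (W x)
  have hg : Measurable g := hW.ennreal_ofReal
  have hgt (x) : g x ≠ ⊤ := ofReal_ne_top
  have hg0 : ∀ᵐ x, g x ≠ 0 := hpos.mono fun x hx => (ofReal_pos.2 hx).ne'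
  have : (volume.withDensity g).IsOpenPosMeasure :=
    (withDensity_absolutelyContinuous' hg.aemeasurable hg0).isOpenPosMeasure
  rcases h with h | ⟨p, hp, h⟩
  · obtain ⟨C, hC⟩ := h.exists_a1OnBalls
    have := hC.isFiniteMeasureOnCompacts_withDensity hgt
    exact ⟨this, hC.ainftyOnBalls_withDensity hg⟩
  · obtain ⟨C, hC⟩ := h.exists_apOnBalls hp
    have := hC.isFiniteMeasureOnCompacts_withDensity hp hg hgt
    exact ⟨this, hC.ainftyOnBalls_withDensity hp hg hgt hg0⟩

end Cubes

section PointwiseBound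

theorem MultiA1OnBalls.ae_withDensity_closedBall_le_prod {X ι : Type*} [PseudoMetricSpace X]
    [MeasurableSpace X] [OpensMeasurableSpace X] [Fintype ι] {μ : Measure X} [SigmaFinite μ]
    {σ : ι → X → ℝ≥0∞} {C : ℝ≥0} (h : MultiA1OnBalls μ σ C) (x : X) {r : ℝ} (hr : 0 < r) :
    ∀ᵐ y ∂Measure.pi fun _ : ι => μ, (∀ i, y i ∈ closedBall x r) →
      μ.withDensity (∏ i, σ i) (closedBall x r) ≤ C * μ (closedBall x r) * ∏ i, σ i (y i) := by
  have hσ (i : ι) : ∀ᵐ z ∂μ, z ∈ closedBall x r →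
      essInf (σ i) (μ.restrict (closedBall x r)) ≤ σ i z :=
    (ae_restrict_iff' measurableSet_closedBall).1 ae_essInf_le
  filter_upwards [ae_all_iff.2 fun i => (Measure.quasiMeasurePreserving_eval _ i).ae (hσ i)]
    with y hy hyB
  refine (h x r hr).trans ?_
  gcongr with i
  exact hy i (hyB i)

theorem inv_le_mul_inv_of_le_mul {a b c : ℝ≥0∞} (hb0 : b ≠ 0) (hbt : b ≠ ⊤)
    (h : b ≤ a * c) : a⁻¹ ≤ c * b⁻¹ := by
  rw [← div_eq_mul_inv, ENNReal.le_div_iff_mul_le (.inl hb0) (.inl hbt), mul_comm,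
    ← div_eq_mul_inv]
  exact ENNReal.div_le_of_le_mul' h

theorem dist_le_sum_dist {X ι : Type*} [PseudoMetricSpace X] [Fintype ι] (x : X) (y : ι → X)
    (i : ι) : dist x (y i) ≤ ∑ j, dist x (y j) :=
  Finset.single_le_sum (f := fun j => dist x (y j)) (fun _ _ => dist_nonneg) (Finset.mem_univ i)

theorem inv_measure_closedBall_le_prod_ballMass_rpow {X ι : Type*} [PseudoMetricSpace X]
    [MeasurableSpace X] [Fintype ι] [Nonempty ι] (ν : Measure X) {x : X} {y : ι → X} {r : ℝ}
    (hr : 2 * ∑ i, dist x (y i) ≤ r) :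
    (ν (closedBall x r))⁻¹ ≤ ∏ i, ballMass ν x (y i) ^ (-(Fintype.card ι : ℝ)⁻¹) := by
  have hsub (i : ι) : closedBall (y i) (dist x (y i)) ⊆ closedBall x r := by
    refine closedBall_subset_closedBall' ?_
    have := dist_le_sum_dist x y i
    rw [dist_comm (y i)]
    linarith
  calc (ν (closedBall x r))⁻¹
      = ∏ _i : ι, ν (closedBall x r) ^ (-(Fintype.card ι : ℝ)⁻¹) := by
        rw [Finset.prod_const, Finset.card_univ, ← ENNReal.rpow_mul_natCast, neg_mul,
          inv_mul_cancel₀ (by simp), ENNReal.rpow_neg_one]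
    _ ≤ ∏ i, ballMass ν x (y i) ^ (-(Fintype.card ι : ℝ)⁻¹) := by
        refine Finset.prod_le_prod' fun i _ => ?_
        simp only [ENNReal.rpow_neg, ENNReal.inv_le_inv]
        exact ENNReal.rpow_le_rpow (measure_mono (hsub i)) (by positivity)

theorem exists_two_mul_le_zpow_le_four_mul {R : ℝ} (hR : 0 < R) :
    ∃ k : ℤ, 2 * R ≤ 2 ^ k ∧ (2 : ℝ) ^ k ≤ 4 * R := by
  obtain ⟨k, hk, hk'⟩ := exists_mem_Ioc_zpow (mul_pos two_pos hR) (one_lt_two (α := ℝ))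
  refine ⟨k + 1, hk', ?_⟩
  rw [zpow_add_one₀ two_ne_zero]
  linarith

theorem MultiA1OnBalls.exists_inv_sum_dist_pow_le {E ι : Type*} [NormedAddCommGroup E]
    [NormedSpace ℝ E] [FiniteDimensional ℝ E] [MeasurableSpace E] [BorelSpace E] [Fintype ι]
    [Nonempty ι] {μ : Measure E} [μ.IsAddHaarMeasure] {σ : ι → E → ℝ≥0∞} {C : ℝ≥0}
    (h : MultiA1OnBalls μ σ C) [IsFiniteMeasureOnCompacts (μ.withDensity (∏ i, σ i))]
    [(μ.withDensity (∏ i, σ i)).IsOpenPosMeasure] :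
    ∃ K : ℝ≥0, ∀ x, ∀ᵐ y ∂Measure.pi fun _ : ι => μ, 0 < ∑ i, dist x (y i) →
      (ENNReal.ofReal (∑ i, dist x (y i)) ^ Module.finrank ℝ E)⁻¹ ≤
        K * ∏ i, σ i (y i) *
          ballMass (μ.withDensity (∏ i, σ i)) x (y i) ^ (-(Fintype.card ι : ℝ)⁻¹) := by
  set ν := μ.withDensity (∏ i, σ i)
  set d := Module.finrank ℝ E
  have hμ : μ (closedBall 0 1) ≠ ⊤ := measure_closedBall_lt_top.ne
  refine ⟨C * 4 ^ d * (μ (closedBall 0 1)).toNNReal, fun x => ?_⟩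
  -- Dyadic radii, so that a single null set of `y` serves all of them.
  filter_upwards [ae_all_iff.2 fun k : ℤ => h.ae_withDensity_closedBall_le_prod x
    (zpow_pos two_pos k)] with y hy hR
  set R := ∑ i, dist x (y i)
  obtain ⟨k, hk, hk'⟩ := exists_two_mul_le_zpow_le_four_mul hR
  set B := closedBall x ((2 : ℝ) ^ k)
  have hmem (i : ι) : y i ∈ B := by
    have := dist_le_sum_dist x y i
    rw [mem_closedBall']
    linarith
  have hvol : μ B ≤ 4 ^ d * ENNReal.ofReal R ^ d * μ (closedBall 0 1) := by
    rw [Measure.addHaar_closedBall' _ _ (by positivity), ENNReal.ofReal_pow (by positivity),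
      ← mul_pow]
    gcongr
    exact (ENNReal.ofReal_le_ofReal hk').trans_eq (by simp [ENNReal.ofReal_mul])
  have hνB : ν B ≤ ENNReal.ofReal R ^ d *
      ((C * 4 ^ d * (μ (closedBall 0 1)).toNNReal : ℝ≥0) * ∏ i, σ i (y i)) := calc
    ν B ≤ C * (4 ^ d * ENNReal.ofReal R ^ d * μ (closedBall 0 1)) * ∏ i, σ i (y i) :=
      (hy k hmem).trans (by gcongr)
    _ = _ := by push_cast [ENNReal.coe_toNNReal hμ]; ring
  rw [Finset.prod_mul_distrib, ← mul_assoc]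
  refine (inv_le_mul_inv_of_le_mul (measure_closedBall_pos ν x (by positivity)).ne'
    measure_closedBall_lt_top.ne hνB).trans ?_
  gcongr
  exact inv_measure_closedBall_le_prod_ballMass_rpow ν hk

variable {n m : ℕ}

theorem MultiA1OnBalls.exists_inv_sum_dist_rpow_le (hn : 0 < n) (hm : 0 < m)
    {σ : Fin m → ESp n → ℝ≥0∞} {C : ℝ≥0} (h : MultiA1OnBalls volume σ C)
    [IsFiniteMeasureOnCompacts (volume.withDensity (∏ i, σ i))]
    [(volume.withDensity (∏ i, σ i)).IsOpenPosMeasure] {s : ℝ} (hs : 0 ≤ s) :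
    ∃ K : ℝ≥0, ∀ x, ∀ᵐ y : Fin m → ESp n,
      ‖((∑ i, dist x (y i)) ^ (n * s))⁻¹‖ₑ ≤ K * ∏ i, σ i (y i) ^ s *
        ballMass (volume.withDensity (∏ i, σ i)) x (y i) ^ (-(s / m)) := by
  have : NeZero m := ⟨hm.ne'⟩
  obtain ⟨K, hK⟩ := h.exists_inv_sum_dist_pow_le
  refine ⟨K ^ s, fun x => ?_⟩
  filter_upwards [hK x, ae_sum_dist_pos hn hm x] with y hy hR
  have hnorm : ‖((∑ i, dist x (y i)) ^ (n * s))⁻¹‖ₑ =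
      (ENNReal.ofReal (∑ i, dist x (y i)) ^ n)⁻¹ ^ s := by
    rw [Real.enorm_of_nonneg (by positivity), ENNReal.ofReal_inv_of_pos (by positivity),
      ENNReal.inv_rpow, ← ENNReal.rpow_natCast, ← ENNReal.rpow_mul, ENNReal.ofReal_rpow_of_pos hR]
  rw [hnorm]
  rw [finrank_euclideanSpace_fin, Fintype.card_fin] at hy
  refine (ENNReal.rpow_le_rpow (hy hR) hs).trans_eq ?_
  simp only [ENNReal.mul_rpow_of_nonneg _ _ hs, ← ENNReal.prod_rpow_of_nonneg hs,
    ← ENNReal.coe_rpow_of_nonneg _ hs, ← ENNReal.rpow_mul]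
  ring_nf

theorem MultiA1OnBalls.exists_enorm_multiIα_le (hn : 0 < n) (hm : 0 < m)
    {σ : Fin m → ESp n → ℝ≥0∞} (hσ : ∀ i, Measurable (σ i)) {C : ℝ≥0}
    (h : MultiA1OnBalls volume σ C)
    [IsFiniteMeasureOnCompacts (volume.withDensity (∏ i, σ i))]
    [(volume.withDensity (∏ i, σ i)).IsOpenPosMeasure] {s : ℝ} (hs : 0 ≤ s) {α : ℝ}
    (hα : (m : ℝ) * n - α = n * s) :
    ∃ K : ℝ≥0, ∀ f : Fin m → ESp n → ℝ, (∀ i, Measurable (f i)) → ∀ x,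
      ‖multiIα α f x‖ₑ ≤ K * ∏ i, ∫⁻ y, ‖f i y‖ₑ * σ i y ^ s *
        ballMass (volume.withDensity (∏ i, σ i)) x y ^ (-(s / m)) := by
  set ν := volume.withDensity (∏ i, σ i)
  obtain ⟨K, hK⟩ := h.exists_inv_sum_dist_rpow_le hn hm hs
  refine ⟨K, fun f hf x => ?_⟩
  set G : Fin m → ESp n → ℝ≥0∞ := fun i y => ‖f i y‖ₑ * σ i y ^ s * ballMass ν x y ^ (-(s / m))
  have hG (i) : Measurable (G i) := ((hf i).enorm.mul ((hσ i).pow_const s)).mul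
    ((measurable_ballMass ν).of_uncurry_left.pow_const _)
  calc ‖multiIα α f x‖ₑ
      ≤ ∫⁻ y : Fin m → ESp n, ‖(∏ i, f i (y i)) / (∑ i, dist x (y i)) ^ ((m : ℝ) * n - α)‖ₑ :=
        enorm_integral_le_lintegral_enorm _
    _ ≤ ∫⁻ y : Fin m → ESp n, K * ∏ i, G i (y i) := by
        refine lintegral_mono_ae ((hK x).mono fun y hy => ?_)
        have hprod : ‖∏ i, f i (y i)‖ₑ = ∏ i, ‖f i (y i)‖ₑ := by
          simp [enorm_eq_nnnorm, nnnorm_prod]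
        rw [hα, div_eq_mul_inv, enorm_mul, hprod]
        refine (mul_le_mul_right hy _).trans_eq ?_
        simp only [G, Finset.prod_mul_distrib]
        ring
    _ = K * ∏ i, ∫⁻ y, G i y := by
        have hGm : Measurable fun y : Fin m → ESp n => ∏ i, G i (y i) :=
          Finset.measurable_fun_prod _ fun i _ => (hG i).comp (measurable_pi_apply i)
        rw [lintegral_const_mul _ hGm, volume_pi, lintegral_fin_prod_eq_prod hG]

end PointwiseBound

section WeakBound

theorem mul_meas_lt_rpow_le_of_le_mul {X : Type*} [MeasurableSpace X] {μ : Measure X}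
    {G P : X → ℝ≥0∞} {s : ℝ} (hs : 0 < s) {A : ℝ≥0∞} {c : ℝ≥0} (hGP : ∀ x, G x ≤ c * P x)
    (hP : ∀ t : ℝ≥0, t * μ {x | t ≤ P x} ^ s ≤ A) (t : ℝ≥0) :
    t * μ {x | t < G x} ^ s ≤ c * A := by
  rcases eq_or_ne c 0 with rfl | hc
  · simp_all
  calc t * μ {x | t < G x} ^ s
      ≤ c * ((t / c : ℝ≥0) * μ {x | (t / c : ℝ≥0) ≤ P x} ^ s) := by
        rw [← mul_assoc, ← ENNReal.coe_mul, mul_div_cancel₀ t hc]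
        gcongr
        intro hx
        rw [ENNReal.coe_div hc]
        exact ENNReal.div_le_of_le_mul' ((le_of_lt ‹_›).trans (hGP _))
    _ ≤ c * A := by gcongr; exact hP _

theorem lt_ofReal_rpow_neg_of_ofReal_lt_rpow {a : ℝ≥0∞} {p t : ℝ} (hp : 0 < p) (ht : 0 < t)
    (h : ENNReal.ofReal t < a ^ (-p⁻¹)) : a < ENNReal.ofReal (t ^ (-p)) := by
  rw [ENNReal.rpow_neg, ENNReal.lt_inv_iff_lt_inv, ENNReal.rpow_inv_lt_iff hp] at h
  rwa [← ENNReal.ofReal_rpow_of_pos ht, ENNReal.rpow_neg, ← ENNReal.inv_rpow]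

section Kernel

variable {E : Type*} [NormedAddCommGroup E] [NormedSpace ℝ E] [FiniteDimensional ℝ E]
  [Nontrivial E] [MeasurableSpace E] [BorelSpace E] {μ : Measure E} [μ.IsAddHaarMeasure]

theorem A1OnBalls.exists_withDensity_lt_mul_ballMass_rpow_le {g h : E → ℝ≥0∞} {C : ℝ≥0}
    (hA : A1OnBalls μ g C) (hg : Measurable g) (hh : Measurable h)
    [IsFiniteMeasureOnCompacts (μ.withDensity g)] [(μ.withDensity g).IsOpenPosMeasure]
    [IsFiniteMeasureOnCompacts ((μ.withDensity g).withDensity h)]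
    (hAinf : AinftyOnBalls μ ((μ.withDensity g).withDensity h)) {p : ℝ} (hp : 0 < p) :
    ∃ K : ℝ≥0, ∀ y (t : ℝ), 0 < t → (μ.withDensity g).withDensity h
      {x | ENNReal.ofReal t < (h x * ballMass (μ.withDensity g) x y) ^ (-p⁻¹)} ≤
        K * ENNReal.ofReal (t ^ (-p)) := by
  obtain ⟨D, hD⟩ := (hA.ainftyOnBalls_withDensity hg).exists_measure_closedBall_three_mul_le
  obtain ⟨η, hη1, hη⟩ := hAinf.exists_measure_closedBall_le_three_mul
  obtain ⟨K, hK⟩ := exists_withDensity_mul_ballMass_lt_le hh hD hη1 hη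
    ((hA.withDensity_ainftyOnBalls hg).trans hAinf)
  refine ⟨K, fun y t ht => (measure_mono fun x hx => ?_).trans
    (hK y _ (ofReal_pos.2 (Real.rpow_pos_of_pos ht (-p))).ne')⟩
  exact lt_ofReal_rpow_neg_of_ofReal_lt_rpow hp ht hx

end Kernel

theorem prod_lintegral_mul_rpow_div_rpow {Y ι : Type*} [MeasurableSpace Y] [Fintype ι]
    [Nonempty ι] {ρ : Measure Y} {F : ι → Y → ℝ≥0∞} (hF : ∀ i, Measurable (F i)) {b : Y → ℝ≥0∞}
    (hb : Measurable b) (hbt : ∀ y, b y ≠ ⊤) {a : ℝ≥0∞} (ha : a ≠ ⊤) (s : ℝ) :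
    (∏ i, ∫⁻ y, F i y * b y ^ (-(s / Fintype.card ι)) ∂ρ) / a ^ s =
      ∏ i, ∫⁻ y, F i y * (a * b y) ^ (-(s / Fintype.card ι)) ∂ρ := by
  have hpow : (a ^ s)⁻¹ = ∏ _i : ι, a ^ (-(s / Fintype.card ι)) := by
    rw [Finset.prod_const, Finset.card_univ, ← ENNReal.rpow_mul_natCast, neg_mul,
      div_mul_cancel₀ _ (by simp), ENNReal.rpow_neg]
  rw [div_eq_mul_inv, hpow, ← Finset.prod_mul_distrib]
  refine Finset.prod_congr rfl fun i _ => ?_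
  have hFb : Measurable fun y => F i y * b y ^ (-(s / Fintype.card ι : ℝ)) :=
    (hF i).mul (hb.pow_const _)
  rw [← lintegral_mul_const _ hFb]
  refine lintegral_congr fun y => ?_
  rw [ENNReal.mul_rpow_of_ne_top ha (hbt y)]
  ring

variable {n m : ℕ}

theorem MultiA1OnBalls.exists_mul_withDensity_enorm_multiIα_le (hn : 0 < n) (hm : 0 < m)
    {σ : Fin m → ESp n → ℝ≥0∞} (hσ : ∀ i, Measurable (σ i)) {C : ℝ≥0}
    (h : MultiA1OnBalls volume σ C) {k : ESp n → ℝ≥0∞} (hk : Measurable k) (hkt : ∀ x, k x ≠ ⊤)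
    [IsFiniteMeasureOnCompacts (volume.withDensity (∏ i, σ i))]
    [(volume.withDensity (∏ i, σ i)).IsOpenPosMeasure]
    [IsFiniteMeasureOnCompacts ((volume.withDensity (∏ i, σ i)).withDensity k)]
    (hAinf : AinftyOnBalls volume ((volume.withDensity (∏ i, σ i)).withDensity k)) {s α : ℝ}
    (hs : 0 < s) (hsm : s < m) (hα : (m : ℝ) * n - α = n * s) :
    ∃ K : ℝ≥0, ∀ f : Fin m → ESp n → ℝ, (∀ i, Measurable (f i)) → ∀ t : ℝ≥0,
      t * (volume.withDensity (∏ i, σ i)).withDensity k {x | t < ‖multiIα α f x‖ₑ / k x ^ s} ^ s ≤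
        K * ∏ i, ∫⁻ y, ‖f i y‖ₑ * σ i y ^ s := by
  set ν := volume.withDensity (∏ i, σ i)
  set w := ν.withDensity k
  have : NeZero m := ⟨hm.ne'⟩
  have : NeZero n := ⟨hn.ne'⟩
  have hp : 1 < m / s := (one_lt_div hs).2 hsm
  have hg : Measurable (∏ i, σ i) := by
    rw [Finset.prod_fn]
    exact Finset.measurable_fun_prod _ fun i _ => hσ i
  obtain ⟨D, hD⟩ := h.a1OnBalls.exists_withDensity_lt_mul_ballMass_rpow_le hg hk hAinf
    (zero_lt_one.trans hp)
  obtain ⟨c, hc⟩ := h.exists_enorm_multiIα_le hn hm hσ hs.le hα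
  have hAt : 1 + D / ENNReal.ofReal (m / s - 1) ≠ ⊤ := ENNReal.add_ne_top.2
    ⟨one_ne_top, ENNReal.div_ne_top ENNReal.coe_ne_top (ofReal_pos.2 (sub_pos.2 hp)).ne'⟩
  lift 1 + D / ENNReal.ofReal (m / s - 1) to ℝ≥0 using hAt with A hA
  refine ⟨c * A ^ m, fun f hf t => ?_⟩
  set F : Fin m → ESp n → ℝ≥0∞ := fun i y => ‖f i y‖ₑ * σ i y ^ s
  have hF (i) : Measurable (F i) := (hf i).enorm.mul ((hσ i).pow_const s)
  have hpt (x) : ‖multiIα α f x‖ₑ / k x ^ s ≤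
      c * ∏ i, ∫⁻ y, F i y * (k x * ballMass ν x y) ^ (-(m / s)⁻¹) := by
    have := prod_lintegral_mul_rpow_div_rpow (ρ := volume) hF
      (measurable_ballMass ν).of_uncurry_left (fun y => measure_closedBall_lt_top.ne) (hkt x) s
      (b := ballMass ν x)
    rw [Fintype.card_fin] at this
    rw [inv_div, ← this, ← mul_div_assoc]
    exact ENNReal.div_le_div_right (hc f hf x) _
  have hweak (t : ℝ≥0) := mul_meas_rpow_le_prod_lintegral (ρ := volume)
    (((hk.comp measurable_fst).mul (measurable_ballMass ν)).pow_const (-(m / s)⁻¹)) hp hD hF t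
  refine (mul_meas_lt_rpow_le_of_le_mul hs hpt (A := A ^ m * ∏ i, ∫⁻ y, F i y) ?_ t).trans_eq ?_
  · have hm0 : (m : ℝ) ≠ 0 := by simp [hm.ne']
    simpa [← hA, Finset.prod_mul_distrib, div_div_cancel₀ hm0] using hweak
  · push_cast
    ring

end WeakBound

section RealWeights

variable {n m : ℕ}

theorem wnorm_le_of_forall_mul_withDensity_le {g : ESp n → ℝ≥0∞} {q : ℝ} {w : ESp n → ℝ}
    {A : ℝ≥0∞} (h : ∀ t : ℝ≥0,
      t * volume.withDensity (fun x => ENNReal.ofReal (w x)) {x | t < g x} ^ q⁻¹ ≤ A) :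
    wnorm g q w ≤ A := by
  refine iSup₂_le fun t _ => ?_
  rw [wMeas, ← withDensity_apply', one_div]
  exact h t.toNNReal

theorem withDensity_ofReal_prod_mul {X ι : Type*} [MeasurableSpace X] [Fintype ι] (μ : Measure X)
    {a : ι → X → ℝ} {b : X → ℝ} (ha : ∀ i, Measurable (a i)) (ha0 : ∀ i x, 0 ≤ a i x)
    (hb : Measurable b) :
    μ.withDensity (fun x => ENNReal.ofReal ((∏ i, a i x) * b x)) =
      (μ.withDensity (∏ i, fun x => ENNReal.ofReal (a i x))).withDensity
        fun x => ENNReal.ofReal (b x) := by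
  have hprod : Measurable (∏ i, fun x => ENNReal.ofReal (a i x)) := by
    rw [Finset.prod_fn]
    exact Finset.measurable_fun_prod _ fun i _ => (ha i).ennreal_ofReal
  rw [← withDensity_mul _ hprod hb.ennreal_ofReal]
  congr 1 with x
  rw [ENNReal.ofReal_mul (Finset.prod_nonneg fun i _ => ha0 i x),
    ENNReal.ofReal_prod_of_nonneg fun i _ => ha0 i x, Pi.mul_apply, Finset.prod_apply]

theorem isOpenPosMeasure_withDensity_prod {ι : Type*} [Fintype ι] {σ : ι → ESp n → ℝ≥0∞}
    (hσ : ∀ i, Measurable (σ i)) (hpos : ∀ i, ∀ᵐ x, σ i x ≠ 0) :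
    (volume.withDensity (∏ i, σ i)).IsOpenPosMeasure := by
  have hprod : Measurable (∏ i, σ i) := by
    rw [Finset.prod_fn]
    exact Finset.measurable_fun_prod _ fun i _ => hσ i
  refine (withDensity_absolutelyContinuous' hprod.aemeasurable ?_).isOpenPosMeasure
  filter_upwards [ae_all_iff.2 hpos] with x hx
  simpa [Finset.prod_eq_zero_iff] using hx

theorem exists_wnorm_multiIα_div_rpow_le (hn : 0 < n) (hm : 0 < m) {a : Fin m → ESp n → ℝ}
    {b : ESp n → ℝ} (ha : ∀ i, Measurable (a i)) (ha0 : ∀ i x, 0 ≤ a i x)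
    (hapos : ∀ i, ∀ᵐ x, 0 < a i x) (hb : Measurable b) (hb0 : ∀ x, 0 ≤ b x)
    (hbpos : ∀ᵐ x, 0 < b x) (hA : A11 fun i x => a i x ^ (m : ℝ))
    (hAinf : IsAinfty fun x => (∏ i, a i x) * b x) {s α : ℝ} (hs : 0 < s) (hsm : s < m)
    (hα : (m : ℝ) * n - α = n * s) :
    ∃ K : ℝ≥0, ∀ f : Fin m → ESp n → ℝ, (∀ i, Measurable (f i)) →
      wnorm (fun x => ENNReal.ofReal |multiIα α f x| / ENNReal.ofReal (b x ^ s)) s⁻¹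
        (fun x => (∏ i, a i x) * b x) ≤ K * ∏ i, L1norm (f i) fun x => a i x ^ s := by
  obtain ⟨C, hC⟩ := hA.exists_multiA1OnBalls hm fun i x => Real.rpow_nonneg (ha0 i x) _
  have hm0 : (m : ℝ) ≠ 0 := by simp [hm.ne']
  simp only [Real.rpow_rpow_inv (ha0 _ _) hm0] at hC
  have hpos : ∀ᵐ x, 0 < (∏ i, a i x) * b x := by
    filter_upwards [ae_all_iff.2 hapos, hbpos] with x hax hbx
    exact mul_pos (Finset.prod_pos fun i _ => hax i) hbx
  obtain ⟨hfin, hAinf⟩ := hAinf.isFiniteMeasureOnCompacts_and_ainftyOnBalls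
    (W := fun x => (∏ i, a i x) * b x)
    ((Finset.measurable_fun_prod _ fun i _ => ha i).mul hb) hpos
  have hdens := withDensity_ofReal_prod_mul volume ha ha0 hb
  rw [hdens] at hfin hAinf
  have hσ (i) := (ha i).ennreal_ofReal
  have := isOpenPosMeasure_withDensity_prod hσ fun i =>
    (hapos i).mono fun x hx => (ofReal_pos.2 hx).ne'
  have := hC.a1OnBalls.isFiniteMeasureOnCompacts_withDensity fun x => by
    rw [Finset.prod_apply]
    exact ENNReal.prod_ne_top fun i _ => ofReal_ne_top
  obtain ⟨K, hK⟩ := hC.exists_mul_withDensity_enorm_multiIα_le hn hm hσ hb.ennreal_ofReal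
    (fun x => ofReal_ne_top) hAinf hs hsm hα
  have hL1 (f : ESp n → ℝ) (i) :
      L1norm f (fun x => a i x ^ s) = ∫⁻ x, ‖f x‖ₑ * ENNReal.ofReal (a i x) ^ s := by
    simp only [L1norm, ENNReal.ofReal_mul (abs_nonneg _), Real.enorm_eq_ofReal_abs,
      ENNReal.ofReal_rpow_of_nonneg (ha0 i _) hs.le]
  refine ⟨K, fun f hf => wnorm_le_of_forall_mul_withDensity_le fun t => ?_⟩
  simp only [inv_inv, hL1, hdens, ← Real.enorm_eq_ofReal_abs,
    ← ENNReal.ofReal_rpow_of_nonneg (hb0 _) hs.le]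
  exact hK f hf t

end RealWeights

end

/-- **Main theorem on `𝓘_α`, first weight condition.**  Let `0 < α < mn`,
`q = n/(mn-α)`, `ν = ∏ uᵢ^q`.  If `u⃗^{mq} ∈ A_{(1,…,1)}` and `ν v^q ∈ A_∞`, then there
is `C` such that `‖𝓘_α(f⃗)/v‖_{L^{q,∞}(ν v^q)} ≤ C ∏ ‖fᵢ‖_{L¹(uᵢ)}`. -/
theorem multilinear_fracIntegral_mixed_first {n m : ℕ} (hn : 0 < n) (hm : 0 < m)
    (α q : ℝ) (hα0 : 0 < α) (hα : α < (m : ℝ) * (n : ℝ))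
    (hq : q = (n : ℝ) / ((m : ℝ) * (n : ℝ) - α))
    (u : Fin m → ESp n → ℝ) (v : ESp n → ℝ)
    (hu : ∀ i, IsWeight (u i)) (hv : IsWeight v)
    (hA : A11 (fun i x => u i x ^ ((m : ℝ) * q)))
    (hAinf : IsAinfty (fun x => (∏ i, u i x ^ q) * v x ^ q)) :
    ∃ C : ℝ≥0∞, C < ⊤ ∧
      ∀ f : Fin m → ESp n → ℝ,
        wnorm (fun x => ENNReal.ofReal |multiIα α f x| / ENNReal.ofReal (v x)) q
            (fun x => (∏ i, u i x ^ q) * v x ^ q)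
          ≤ C * ∏ i, L1norm (f i) (u i) := by
  have hαn : 0 < m * n - α := sub_pos.2 hα
  have hq0 : 0 < q := by rw [hq]; positivity
  have hu0 (i x) : 0 ≤ u i x := (hu i).2.1 x
  have hpow (i x) : u i x ^ (m * q) = (u i x ^ q) ^ (m : ℝ) := by
    rw [← Real.rpow_mul (hu0 i x), mul_comm]
  simp only [hpow] at hA
  obtain ⟨K, hK⟩ := exists_wnorm_multiIα_div_rpow_le (s := q⁻¹) (α := α) hn hm
    (fun i => (hu i).1.pow_const q) (fun i x => Real.rpow_nonneg (hu0 i x) q)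
    (fun i => (hu i).2.2.1.mono fun x hx => Real.rpow_pos_of_pos hx q) (hv.1.pow_const q)
    (fun x => Real.rpow_nonneg (hv.2.1 x) q)
    (hv.2.2.1.mono fun x hx => Real.rpow_pos_of_pos hx q) hA hAinf (inv_pos.2 hq0)
    (by rw [hq, inv_div, div_lt_iff₀ (by positivity)]; linarith) (by rw [hq]; field_simp)
  simp only [inv_inv, Real.rpow_rpow_inv (hu0 _ _) hq0.ne', Real.rpow_rpow_inv (hv.2.1 _) hq0.ne']
    at hK
  refine ⟨K, coe_lt_top, fun f => ?_⟩
  obtain ⟨g, hg, hfg, hle⟩ := exists_measurable_multiIα_eq hn α f u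
  rw [← hfg]
  exact (hK g hg).trans (by gcongr with i; exact hle i)

end
end

section
/- (Characterization of multilinear A_{\vec P} classes) Let 1≤p_1,…,p_m<∞, define p by 1/p = 1/p_1+⋯+1/p_m, and let w⃗=(w_1,…,w_m) be weights on ℝ^n. Then w⃗ ∈ A_{\vec P} if and only if: (i) for each i with p_i>1, w_i^{1−p_i'} ∈ A_{m p_i'}, and for each i with p_i=1, w_i^{1/m} ∈ A_1; and (ii) ν_{w⃗} = ∏_{i=1}^m w_i^{p/p_i} ∈ A_{mp}. -/
open MeasureTheory ENNReal Set

noncomputable section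

/-- The multilinear Muckenhoupt class `A_{\vec P}` for `P⃗ = (p₁,…,p_m)`, where
`1/p = ∑ 1/pᵢ`, and for `pᵢ = 1` the corresponding factor is `(ess inf_Q wᵢ)⁻¹`. -/
def AvecP {n m : ℕ} (p : Fin m → ℝ) (w : Fin m → ESp n → ℝ) : Prop :=
  ∃ C : ℝ≥0∞, C < ⊤ ∧ ∀ Q : Set (ESp n), IsCube Q →
    ((volume Q)⁻¹ *
        ∫⁻ x in Q, ENNReal.ofReal (∏ i, w i x ^ ((∑ j, (p j)⁻¹)⁻¹ / p i))) ^ (∑ j, (p j)⁻¹) *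
      ∏ i, (if p i = 1 then
              (essInf (fun x => ENNReal.ofReal (w i x)) (volume.restrict Q))⁻¹
            else
              ((volume Q)⁻¹ *
                  ∫⁻ x in Q, ENNReal.ofReal (w i x) ^ (1 - p i / (p i - 1))) ^ (1 - (p i)⁻¹))
      ≤ C

/-- The class `A_r` for `1 ≤ r < ∞`: `A₁` when `r = 1`, the usual `A_r` when `r > 1`. -/
def IsApGen {n : ℕ} (w : ESp n → ℝ) (r : ℝ) : Prop :=
  if r = 1 then IsA1 w else IsAp w r

/-!
Put `uᵢ = wᵢ ^ (1 / pᵢ)`. In terms of means over a cube with respect to normalized Lebesgue measure,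
`A_{\vec P}` bounds `‖∏ uᵢ‖_p ∏ ‖uᵢ⁻¹‖_{pᵢ'}`, condition (i) bounds `‖uᵢ⁻¹‖_{pᵢ'} ‖uᵢ‖_{rᵢ}` with
`1 / rᵢ = m - 1 / pᵢ' = 1 / p + ∑_{j ≠ i} 1 / pⱼ'`, and condition (ii) bounds
`‖∏ uᵢ‖_p ‖(∏ uᵢ)⁻¹‖_s` with `1 / s = m - 1 / p = ∑ 1 / pᵢ'`. Hölder's inequality for
`uᵢ = (∏ uⱼ) ∏_{j ≠ i} uⱼ⁻¹` and for `∏ uᵢ⁻¹` gives the direct implication. For the converse,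
multiply all the bounds: the surplus factor `∏ ‖uᵢ‖_{rᵢ} ‖(∏ uᵢ)⁻¹‖_s` is at least `1`, by Hölder's
inequality for `1 = (∏ uᵢ) (∏ uᵢ)⁻¹`.

Exponents are written `(ENNReal.ofReal t)⁻¹` in terms of their reciprocal `t`, so that `t = 0` is
the essential supremum and the case `pᵢ = 1` fits the same formulas.
-/

section UniformlyFinite

/-- The family `F` is bounded by a single finite constant. Every Muckenhoupt condition says this
of a family of products of means, indexed by the cubes. -/
def IsUniformlyFinite {κ : Type*} (F : κ → ℝ≥0∞) : Prop :=
  ∃ C : ℝ≥0∞, C < ⊤ ∧ ∀ k, F k ≤ C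

namespace IsUniformlyFinite

variable {κ : Type*} {F G : κ → ℝ≥0∞}

lemma mono (hG : IsUniformlyFinite G) (h : ∀ k, F k ≤ G k) : IsUniformlyFinite F :=
  let ⟨C, hC, hGC⟩ := hG
  ⟨C, hC, fun k => (h k).trans (hGC k)⟩

lemma mul (hF : IsUniformlyFinite F) (hG : IsUniformlyFinite G) :
    IsUniformlyFinite fun k => F k * G k :=
  let ⟨C, hC, hFC⟩ := hF
  let ⟨D, hD, hGD⟩ := hG
  ⟨C * D, ENNReal.mul_lt_top hC hD, fun k => mul_le_mul' (hFC k) (hGD k)⟩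

lemma prod {ι : Type*} {s : Finset ι} {F : ι → κ → ℝ≥0∞}
    (hF : ∀ i ∈ s, IsUniformlyFinite (F i)) : IsUniformlyFinite fun k => ∏ i ∈ s, F i k := by
  choose! C hC hFC using hF
  exact ⟨∏ i ∈ s, C i, ENNReal.prod_lt_top hC, fun k => Finset.prod_le_prod' fun i hi => hFC i hi k⟩

lemma rpow (hF : IsUniformlyFinite F) {e : ℝ} (he : 0 ≤ e) :
    IsUniformlyFinite fun k => F k ^ e :=
  let ⟨C, hC, hFC⟩ := hF
  ⟨C ^ e, ENNReal.rpow_lt_top_of_nonneg he hC.ne, fun k => ENNReal.rpow_le_rpow (hFC k) he⟩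

lemma rpow_iff {e : ℝ} (he : 0 < e) :
    (IsUniformlyFinite fun k => F k ^ e) ↔ IsUniformlyFinite F := by
  refine ⟨fun h => ?_, fun h => h.rpow he.le⟩
  simpa only [ENNReal.rpow_rpow_inv he.ne'] using h.rpow (inv_nonneg.2 he.le)

end IsUniformlyFinite

end UniformlyFinite

section Holder

variable {X 𝕜 ι : Type*} [MeasurableSpace X] [NormedField 𝕜] {μ : Measure X}

lemma eLpNorm_mul_le {f g : X → 𝕜} (hf : AEStronglyMeasurable f μ)
    (hg : AEStronglyMeasurable g μ) (a b : ℝ≥0∞) :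
    eLpNorm (f * g) (a⁻¹ + b⁻¹)⁻¹ μ ≤ eLpNorm f a μ * eLpNorm g b μ := by
  have := ENNReal.HolderTriple.of a b
  rw [← smul_eq_mul]
  exact eLpNorm_smul_le_mul_eLpNorm hg hf

lemma eLpNorm_one_of_isProbabilityMeasure [IsProbabilityMeasure μ] {r : ℝ≥0∞} (hr : r ≠ 0) :
    eLpNorm (1 : X → 𝕜) r μ = 1 := by
  simpa using! eLpNorm_const (1 : 𝕜) hr (IsProbabilityMeasure.ne_zero μ)

lemma eLpNorm_prod_le [IsProbabilityMeasure μ] {s : Finset ι} {f : ι → X → 𝕜}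
    (hf : ∀ i ∈ s, AEStronglyMeasurable (f i) μ) (q : ι → ℝ≥0∞) :
    eLpNorm (∏ i ∈ s, f i) (∑ i ∈ s, (q i)⁻¹)⁻¹ μ ≤ ∏ i ∈ s, eLpNorm (f i) (q i) μ := by
  induction s using Finset.cons_induction with
  | empty => simpa only [Finset.prod_empty, Finset.sum_empty, ENNReal.inv_zero] using
      (eLpNorm_one_of_isProbabilityMeasure ENNReal.top_ne_zero).le
  | cons i s hi ih =>
    rw [Finset.forall_mem_cons] at hf
    rw [Finset.prod_cons, Finset.sum_cons, Finset.prod_cons]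
    calc eLpNorm (f i * ∏ j ∈ s, f j) ((q i)⁻¹ + ∑ j ∈ s, (q j)⁻¹)⁻¹ μ
        ≤ eLpNorm (f i) (q i) μ * eLpNorm (∏ j ∈ s, f j) (∑ j ∈ s, (q j)⁻¹)⁻¹ μ := by
          simpa using eLpNorm_mul_le hf.1 (s.aestronglyMeasurable_prod hf.2) (q i)
            (∑ j ∈ s, (q j)⁻¹)⁻¹
      _ ≤ _ := by gcongr; exact ih hf.2

lemma one_le_eLpNorm_mul_eLpNorm_inv [IsProbabilityMeasure μ] {f : X → 𝕜}
    (hf : AEStronglyMeasurable f μ) (hf₀ : ∀ᵐ x ∂μ, f x ≠ 0) {a b : ℝ≥0∞} (ha : a ≠ 0)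
    (hb : b ≠ 0) : 1 ≤ eLpNorm f a μ * eLpNorm f⁻¹ b μ := by
  have hone : (1 : X → 𝕜) =ᵐ[μ] f * f⁻¹ := by
    filter_upwards [hf₀] with x hx
    simp [hx]
  calc 1 = eLpNorm (f * f⁻¹) (a⁻¹ + b⁻¹)⁻¹ μ := by
        rw [← eLpNorm_congr_ae hone, eLpNorm_one_of_isProbabilityMeasure (by simp [ha, hb])]
    _ ≤ _ := eLpNorm_mul_le hf hf.inv₀ a b

lemma eLpNorm_le_eLpNorm_prod_mul_prod_eLpNorm_inv [IsProbabilityMeasure μ] [DecidableEq ι]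
    {s : Finset ι} {u : ι → X → 𝕜} (hu : ∀ i ∈ s, AEStronglyMeasurable (u i) μ)
    (hu₀ : ∀ i ∈ s, ∀ᵐ x ∂μ, u i x ≠ 0) (p₀ : ℝ≥0∞) (q : ι → ℝ≥0∞) {i : ι} (hi : i ∈ s) :
    eLpNorm (u i) (p₀⁻¹ + ∑ j ∈ s.erase i, (q j)⁻¹)⁻¹ μ ≤
      eLpNorm (∏ j ∈ s, u j) p₀ μ * ∏ j ∈ s.erase i, eLpNorm (u j)⁻¹ (q j) μ := by
  have hui : u i =ᵐ[μ] (∏ j ∈ s, u j) * ∏ j ∈ s.erase i, (u j)⁻¹ := by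
    filter_upwards [(ae_ball_iff s.countable_toSet).2 hu₀] with x hx
    have hprod : ∏ j ∈ s.erase i, u j x ≠ 0 :=
      Finset.prod_ne_zero_iff.2 fun j hj => hx j (Finset.mem_of_mem_erase hj)
    simp [← Finset.mul_prod_erase s (fun j => u j x) hi, hprod]
  have hinv : ∀ j ∈ s.erase i, AEStronglyMeasurable (u j)⁻¹ μ := fun j hj =>
    (hu j (Finset.mem_of_mem_erase hj)).inv₀
  rw [eLpNorm_congr_ae hui]
  calc eLpNorm ((∏ j ∈ s, u j) * ∏ j ∈ s.erase i, (u j)⁻¹)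
          (p₀⁻¹ + ∑ j ∈ s.erase i, (q j)⁻¹)⁻¹ μ
      ≤ eLpNorm (∏ j ∈ s, u j) p₀ μ *
          eLpNorm (∏ j ∈ s.erase i, (u j)⁻¹) (∑ j ∈ s.erase i, (q j)⁻¹)⁻¹ μ := by
        simpa using eLpNorm_mul_le (s.aestronglyMeasurable_prod hu)
          (Finset.aestronglyMeasurable_prod _ hinv) p₀ (∑ j ∈ s.erase i, (q j)⁻¹)⁻¹
    _ ≤ _ := by gcongr; exact eLpNorm_prod_le hinv q

lemma one_le_prod_eLpNorm_mul_eLpNorm_inv_prod [IsProbabilityMeasure μ] {s : Finset ι}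
    {u : ι → X → 𝕜} (hu : ∀ i ∈ s, AEStronglyMeasurable (u i) μ)
    (hu₀ : ∀ i ∈ s, ∀ᵐ x ∂μ, u i x ≠ 0) {r : ι → ℝ≥0∞} (hr : ∀ i ∈ s, r i ≠ 0) {b : ℝ≥0∞}
    (hb : b ≠ 0) :
    1 ≤ (∏ i ∈ s, eLpNorm (u i) (r i) μ) * eLpNorm (∏ i ∈ s, u i)⁻¹ b μ := by
  have hprod₀ : ∀ᵐ x ∂μ, (∏ i ∈ s, u i) x ≠ 0 := by
    filter_upwards [(ae_ball_iff s.countable_toSet).2 hu₀] with x hx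
    simpa only [Finset.prod_apply] using Finset.prod_ne_zero_iff.2 hx
  have hsum : (∑ i ∈ s, (r i)⁻¹)⁻¹ ≠ 0 := by simpa using hr
  refine (one_le_eLpNorm_mul_eLpNorm_inv (s.aestronglyMeasurable_prod hu) hprod₀ hsum hb).trans ?_
  gcongr
  exact eLpNorm_prod_le hu r

theorem isUniformlyFinite_eLpNorm_prod_mul_prod_eLpNorm_inv_iff [Fintype ι] [DecidableEq ι]
    {κ : Type*} {μ : κ → Measure X} [∀ k, IsProbabilityMeasure (μ k)] {u : ι → X → 𝕜}
    (hu : ∀ i k, AEStronglyMeasurable (u i) (μ k)) (hu₀ : ∀ i k, ∀ᵐ x ∂μ k, u i x ≠ 0)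
    {p₀ : ℝ≥0∞} (hp₀ : p₀ ≠ 0) {q : ι → ℝ≥0∞} (hq : ∀ i, q i ≠ 0) :
    (IsUniformlyFinite fun k =>
        eLpNorm (∏ i, u i) p₀ (μ k) * ∏ i, eLpNorm (u i)⁻¹ (q i) (μ k)) ↔
      (∀ i, IsUniformlyFinite fun k => eLpNorm (u i)⁻¹ (q i) (μ k) *
        eLpNorm (u i) (p₀⁻¹ + ∑ j ∈ Finset.univ.erase i, (q j)⁻¹)⁻¹ (μ k)) ∧
      IsUniformlyFinite fun k =>
        eLpNorm (∏ i, u i) p₀ (μ k) * eLpNorm (∏ i, u i)⁻¹ (∑ i, (q i)⁻¹)⁻¹ (μ k) := by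
  refine ⟨fun h => ⟨fun i => h.mono fun k => ?_, h.mono fun k => ?_⟩, fun ⟨hi, hprod⟩ => ?_⟩
  · rw [← Finset.mul_prod_erase _ (fun i => eLpNorm (u i)⁻¹ (q i) (μ k)) (Finset.mem_univ i),
      mul_left_comm]
    gcongr
    exact eLpNorm_le_eLpNorm_prod_mul_prod_eLpNorm_inv (fun i _ => hu i k) (fun i _ => hu₀ i k)
      p₀ q (Finset.mem_univ i)
  · rw [← Finset.prod_inv_distrib]
    gcongr
    exact eLpNorm_prod_le (fun i _ => (hu i k).inv₀) q
  · refine ((IsUniformlyFinite.prod fun i (_ : i ∈ Finset.univ) => hi i).mul hprod).mono fun k => ?_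
    have hone := one_le_prod_eLpNorm_mul_eLpNorm_inv_prod (s := Finset.univ)
      (fun i _ => hu i k) (fun i _ => hu₀ i k)
      (r := fun i => (p₀⁻¹ + ∑ j ∈ Finset.univ.erase i, (q j)⁻¹)⁻¹) (b := (∑ i, (q i)⁻¹)⁻¹)
      (fun i _ => by simp [hp₀, hq]) (by simp [hq])
    refine (le_mul_of_one_le_right' hone).trans_eq ?_
    rw [Finset.prod_mul_distrib]
    ring

end Holder

section ReciprocalExponent

variable {X : Type*} [MeasurableSpace X] {μ : Measure X}

lemma eLpNorm_inv_ofReal {ε : Type*} [ENorm ε] (f : X → ε) {t : ℝ} (ht : 0 < t) :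
    eLpNorm f (ENNReal.ofReal t)⁻¹ μ = (∫⁻ x, ‖f x‖ₑ ^ t⁻¹ ∂μ) ^ t := by
  rw [eLpNorm_eq_lintegral_rpow_enorm_toReal (by simp) (by simpa using ht)]
  simp [ENNReal.toReal_ofReal ht.le]

lemma eLpNorm_top_inv {v : X → ℝ} (hv : ∀ᵐ x ∂μ, 0 < v x) :
    eLpNorm v⁻¹ ⊤ μ = (essInf (fun x => ENNReal.ofReal (v x)) μ)⁻¹ := by
  rw [eLpNorm_exponent_top, eLpNormEssSup, essInf, ENNReal.inv_liminf]
  refine essSup_congr_ae ?_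
  filter_upwards [hv] with x hx
  rw [Pi.inv_apply, Real.enorm_of_nonneg (inv_nonneg.2 hx.le), ENNReal.ofReal_inv_of_pos hx]

lemma eLpNorm_inv_inv_ofReal {v : X → ℝ} (hv : ∀ᵐ x ∂μ, 0 < v x) {t : ℝ} (ht : 0 < t) :
    eLpNorm v⁻¹ (ENNReal.ofReal t)⁻¹ μ = (∫⁻ x, ENNReal.ofReal (v x) ^ (-t⁻¹) ∂μ) ^ t := by
  rw [eLpNorm_inv_ofReal _ ht]
  congr 1
  refine lintegral_congr_ae ?_
  filter_upwards [hv] with x hx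
  rw [Pi.inv_apply, Real.enorm_of_nonneg (inv_nonneg.2 hx.le), ENNReal.ofReal_inv_of_pos hx,
    ENNReal.inv_rpow, ENNReal.rpow_neg]

lemma eLpNorm_rpow_inv_ofReal {f : X → ℝ} (hf : ∀ᵐ x ∂μ, 0 ≤ f x) {t : ℝ} (ht : 0 < t) (a : ℝ) :
    eLpNorm (fun x => f x ^ t⁻¹) (ENNReal.ofReal a)⁻¹ μ =
      eLpNorm f (ENNReal.ofReal (a * t))⁻¹ μ ^ t⁻¹ := by
  have hexp : (ENNReal.ofReal (a * t))⁻¹ = (ENNReal.ofReal a)⁻¹ * ENNReal.ofReal t⁻¹ := by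
    rw [ENNReal.ofReal_mul' ht.le, ENNReal.mul_inv (by simp) (by simp [ht]),
      ENNReal.ofReal_inv_of_pos ht]
  rw [hexp, ← eLpNorm_norm_rpow f (inv_pos.2 ht)]
  refine eLpNorm_congr_ae ?_
  filter_upwards [hf] with x hx
  rw [Real.norm_of_nonneg hx]

lemma sum_ofReal_one_sub {ι : Type*} [Fintype ι] {t : ι → ℝ} (ht : ∀ i, t i ≤ 1) :
    ∑ i, ENNReal.ofReal (1 - t i) = ENNReal.ofReal (Fintype.card ι - ∑ i, t i) := by
  rw [← ENNReal.ofReal_sum_of_nonneg fun i _ => sub_nonneg.2 (ht i)]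
  simp

lemma ofReal_sum_add_sum_erase_ofReal_one_sub {ι : Type*} [Fintype ι] [DecidableEq ι]
    {t : ι → ℝ} (ht₀ : ∀ i, 0 ≤ t i) (ht₁ : ∀ i, t i ≤ 1) (i : ι) :
    ENNReal.ofReal (∑ j, t j) + ∑ j ∈ Finset.univ.erase i, ENNReal.ofReal (1 - t j) =
      ENNReal.ofReal (Fintype.card ι - (1 - t i)) := by
  have ht : ∀ j ∈ Finset.univ.erase i, 0 ≤ 1 - t j := fun j _ => sub_nonneg.2 (ht₁ j)
  rw [← ENNReal.ofReal_sum_of_nonneg ht,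
    ← ENNReal.ofReal_add (Finset.sum_nonneg fun j _ => ht₀ j) (Finset.sum_nonneg ht),
    Finset.sum_erase_eq_sub (Finset.mem_univ i)]
  congr 1
  simp only [Finset.sum_sub_distrib, Finset.sum_const, Finset.card_univ, nsmul_eq_mul, mul_one]
  ring

end ReciprocalExponent

section Cube

variable {n : ℕ}

namespace IsCube

variable {Q : Set (ESp n)}

lemma volume_ne_zero_and_ne_top (hQ : IsCube Q) : volume Q ≠ 0 ∧ volume Q ≠ ⊤ := by
  obtain ⟨c, h, hh, rfl⟩ := hQ
  have hIcc : {x : ESp n | ∀ i, c i ≤ x i ∧ x i ≤ c i + h} =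
      (MeasurableEquiv.toLp 2 (Fin n → ℝ)).symm ⁻¹' Set.Icc c (fun i => c i + h) :=
    Set.ext fun _ => forall_and
  rw [hIcc, (EuclideanSpace.volume_preserving_symm_measurableEquiv_toLp
    (Fin n)).measure_preimage_equiv, Real.volume_Icc_pi]
  simp [hh]

lemma isProbabilityMeasure_cond (hQ : IsCube Q) :
    IsProbabilityMeasure (ProbabilityTheory.cond volume Q) :=
  ProbabilityTheory.cond_isProbabilityMeasure_of_finite hQ.volume_ne_zero_and_ne_top.1
    hQ.volume_ne_zero_and_ne_top.2

end IsCube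

/-- The axis-parallel cubes of `ℝ^n`, as an index type. -/
abbrev Cube (n : ℕ) := {Q : Set (ESp n) // IsCube Q}

/-- Normalized Lebesgue measure on a cube, so that `eLpNorm f p Q.avg` is the `p`-mean of `f`
over `Q`. -/
def Cube.avg (Q : Cube n) : Measure (ESp n) := ProbabilityTheory.cond volume Q.1

namespace Cube

variable (Q : Cube n)

instance : IsProbabilityMeasure Q.avg := Q.2.isProbabilityMeasure_cond

lemma ae_avg {P : ESp n → Prop} (h : ∀ᵐ x, P x) : ∀ᵐ x ∂Q.avg, P x :=
  ProbabilityTheory.cond_absolutelyContinuous.ae_le h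

lemma aestronglyMeasurable_avg {f : ESp n → ℝ} (hf : AEMeasurable f) :
    AEStronglyMeasurable f Q.avg :=
  hf.aestronglyMeasurable.mono_ac ProbabilityTheory.cond_absolutelyContinuous

lemma lintegral_avg (f : ESp n → ℝ≥0∞) :
    ∫⁻ x, f x ∂Q.avg = (volume Q.1)⁻¹ * ∫⁻ x in Q.1, f x :=
  lintegral_smul_measure _ _

lemma essInf_avg (f : ESp n → ℝ≥0∞) : essInf f Q.avg = essInf f (volume.restrict Q.1) := by
  rw [essInf, avg, ProbabilityTheory.cond, Measure.ae_ennreal_smul_measure_eq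
    (ENNReal.inv_ne_zero.2 Q.2.volume_ne_zero_and_ne_top.2), essInf]

end Cube

lemma eLpNorm_one_avg {v : ESp n → ℝ} (hv : ∀ᵐ x, 0 ≤ v x) (Q : Cube n) :
    eLpNorm v 1 Q.avg = (volume Q.1)⁻¹ * wMeas v Q.1 := by
  rw [eLpNorm_one_eq_lintegral_enorm, wMeas, ← Q.lintegral_avg]
  refine lintegral_congr_ae ?_
  filter_upwards [Q.ae_avg hv] with x hx
  rw [Real.enorm_of_nonneg hx]

lemma isA1_iff {v : ESp n → ℝ} (hv : ∀ᵐ x, 0 < v x) :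
    IsA1 v ↔ IsUniformlyFinite fun Q : Cube n => eLpNorm v 1 Q.avg * eLpNorm v⁻¹ ⊤ Q.avg := by
  have hmean (Q : Cube n) : eLpNorm v 1 Q.avg * eLpNorm v⁻¹ ⊤ Q.avg =
      (volume Q.1)⁻¹ * wMeas v Q.1 /
        essInf (fun x => ENNReal.ofReal (v x)) (volume.restrict Q.1) := by
    rw [eLpNorm_one_avg (hv.mono fun _ => le_of_lt),
      eLpNorm_top_inv (Q.ae_avg hv), Q.essInf_avg, div_eq_mul_inv]
  simp only [IsUniformlyFinite, hmean, Subtype.forall]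
  refine ⟨fun ⟨C, hC, h⟩ => ⟨C, hC, fun Q hQ => ENNReal.div_le_of_le_mul (h Q hQ)⟩,
    fun ⟨C, hC, h⟩ => ?_⟩
  -- A positive constant is needed: `a / b ≤ 0` does not give `a ≤ 0 * b` when `b = ⊤`.
  have hC' : max C 1 < ⊤ := max_lt hC ENNReal.one_lt_top
  refine ⟨max C 1, hC', fun Q hQ => ?_⟩
  exact (ENNReal.div_le_iff_le_mul (.inr hC'.ne) (.inr (by simp))).1
    ((h Q hQ).trans (le_max_left _ _))

lemma isAp_iff {v : ESp n → ℝ} (hv : ∀ᵐ x, 0 < v x) {r : ℝ} (hr : 1 < r) :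
    IsAp v r ↔ IsUniformlyFinite fun Q : Cube n =>
      eLpNorm v 1 Q.avg * eLpNorm v⁻¹ (ENNReal.ofReal (r - 1))⁻¹ Q.avg := by
  have hexp : 1 - r / (r - 1) = -(r - 1)⁻¹ := by
    field_simp [(sub_pos.2 hr).ne']
    ring
  have hmean (Q : Cube n) : eLpNorm v 1 Q.avg * eLpNorm v⁻¹ (ENNReal.ofReal (r - 1))⁻¹ Q.avg =
      (volume Q.1)⁻¹ * wMeas v Q.1 * ((volume Q.1)⁻¹ *
        ∫⁻ x in Q.1, ENNReal.ofReal (v x) ^ (1 - r / (r - 1))) ^ (r - 1) := by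
    rw [eLpNorm_one_avg (hv.mono fun _ => le_of_lt),
      eLpNorm_inv_inv_ofReal (Q.ae_avg hv) (sub_pos.2 hr), Q.lintegral_avg, hexp]
  simp only [IsUniformlyFinite, hmean, Subtype.forall, IsAp]

lemma isApGen_iff {v : ESp n → ℝ} (hv : ∀ᵐ x, 0 < v x) {r : ℝ} (hr : 1 ≤ r) :
    IsApGen v r ↔ IsUniformlyFinite fun Q : Cube n =>
      eLpNorm v 1 Q.avg * eLpNorm v⁻¹ (ENNReal.ofReal (r - 1))⁻¹ Q.avg := by
  obtain rfl | hr := hr.eq_or_lt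
  · simpa [IsApGen] using isA1_iff hv
  · rw [IsApGen, if_neg hr.ne', isAp_iff hv hr]

lemma isApGen_mul_inv_iff {u v : ESp n → ℝ} (hu : ∀ᵐ x, 0 < u x) {t k : ℝ} (ht : 0 < t)
    (htk : t ≤ k) (hv : v =ᵐ[volume] fun x => u x ^ t⁻¹) :
    IsApGen v (k * t⁻¹) ↔ IsUniformlyFinite fun Q : Cube n =>
      eLpNorm u (ENNReal.ofReal t)⁻¹ Q.avg * eLpNorm u⁻¹ (ENNReal.ofReal (k - t))⁻¹ Q.avg := by
  have hv₀ : ∀ᵐ x, 0 < v x := by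
    filter_upwards [hu, hv] with x hx hvx
    exact hvx ▸ Real.rpow_pos_of_pos hx t⁻¹
  have hmean (Q : Cube n) : eLpNorm v 1 Q.avg *
      eLpNorm v⁻¹ (ENNReal.ofReal (k * t⁻¹ - 1))⁻¹ Q.avg =
        (eLpNorm u (ENNReal.ofReal t)⁻¹ Q.avg *
          eLpNorm u⁻¹ (ENNReal.ofReal (k - t))⁻¹ Q.avg) ^ t⁻¹ := by
    have huQ : ∀ᵐ x ∂Q.avg, 0 ≤ u x := (Q.ae_avg hu).mono fun _ => le_of_lt
    have hvQ : v =ᵐ[Q.avg] fun x => u x ^ t⁻¹ := Q.ae_avg hv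
    have hvinvQ : v⁻¹ =ᵐ[Q.avg] fun x => u⁻¹ x ^ t⁻¹ := by
      filter_upwards [huQ, hvQ] with x hx hvx
      rw [Pi.inv_apply, Pi.inv_apply, hvx, Real.inv_rpow hx]
    have hnum : eLpNorm v 1 Q.avg = eLpNorm u (ENNReal.ofReal t)⁻¹ Q.avg ^ t⁻¹ := by
      rw [eLpNorm_congr_ae hvQ]
      simpa using eLpNorm_rpow_inv_ofReal huQ ht 1
    have hden : eLpNorm v⁻¹ (ENNReal.ofReal (k * t⁻¹ - 1))⁻¹ Q.avg =
        eLpNorm u⁻¹ (ENNReal.ofReal (k - t))⁻¹ Q.avg ^ t⁻¹ := by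
      rw [eLpNorm_congr_ae hvinvQ,
        eLpNorm_rpow_inv_ofReal (f := u⁻¹) (huQ.mono fun _ => inv_nonneg.2) ht]
      congr 4
      field_simp
    rw [hnum, hden, ENNReal.mul_rpow_of_nonneg _ _ (inv_nonneg.2 ht.le)]
  have hr : 1 ≤ k * t⁻¹ := by rwa [← div_eq_mul_inv, one_le_div ht]
  simp only [isApGen_iff hv₀ hr, hmean, IsUniformlyFinite.rpow_iff (inv_pos.2 ht)]

end Cube

section RootWeight

variable {X : Type*} [MeasurableSpace X] {μ : Measure X}

/-- The root `w ^ (1 / p)` of a weight. In terms of the roots `uᵢ` of the `wᵢ`, `ν_{w⃗}` is a power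
of `∏ uᵢ` and `wᵢ ^ (1 - pᵢ')` is a power of `uᵢ⁻¹`. -/
def rootWeight (p : ℝ) (w : X → ℝ) (x : X) : ℝ := w x ^ p⁻¹

lemma rootWeight_pos {w : X → ℝ} (hw : ∀ᵐ x ∂μ, 0 < w x) (p : ℝ) :
    ∀ᵐ x ∂μ, 0 < rootWeight p w x :=
  hw.mono fun _ hx => Real.rpow_pos_of_pos hx _

lemma aemeasurable_rootWeight {w : X → ℝ} (hw : AEMeasurable w μ) (p : ℝ) :
    AEMeasurable (rootWeight p w) μ :=
  hw.pow_const _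

lemma rpow_one_sub_conjExponent_ae_eq {w : X → ℝ} (hw : ∀ᵐ x ∂μ, 0 ≤ w x) {p : ℝ} (hp : 1 < p) :
    (fun x => w x ^ (1 - p / (p - 1))) =ᵐ[μ] fun x => (rootWeight p w)⁻¹ x ^ (1 - p⁻¹)⁻¹ := by
  have hp₀ : p ≠ 0 := by positivity
  have hp₁ : p - 1 ≠ 0 := (sub_pos.2 hp).ne'
  have hexp : 1 - p / (p - 1) = -p⁻¹ * (1 - p⁻¹)⁻¹ := by
    field_simp
    ring
  filter_upwards [hw] with x hx
  rw [Pi.inv_apply, rootWeight, ← Real.rpow_neg hx, ← Real.rpow_mul hx, hexp]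

lemma prod_rpow_div_ae_eq {ι : Type*} [Fintype ι] {w : ι → X → ℝ}
    (hw : ∀ i, ∀ᵐ x ∂μ, 0 ≤ w i x) (p : ι → ℝ) (c : ℝ) :
    (fun x => ∏ i, w i x ^ (c / p i)) =ᵐ[μ]
      fun x => (∏ i, rootWeight (p i) (w i)) x ^ c := by
  filter_upwards [ae_all_iff.2 hw] with x hx
  rw [Finset.prod_apply, ← Real.finsetProd_rpow Finset.univ (fun i => rootWeight (p i) (w i) x)
    fun i _ => Real.rpow_nonneg (hx i) _]
  refine Finset.prod_congr rfl fun i _ => ?_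
  rw [rootWeight, ← Real.rpow_mul (hx i), inv_mul_eq_div]

lemma prod_rootWeight_pos {ι : Type*} [Fintype ι] {w : ι → X → ℝ}
    (hw : ∀ i, ∀ᵐ x ∂μ, 0 < w i x) (p : ι → ℝ) :
    ∀ᵐ x ∂μ, 0 < (∏ i, rootWeight (p i) (w i)) x := by
  filter_upwards [ae_all_iff.2 fun i => rootWeight_pos (hw i) (p i)] with x hx
  simpa only [Finset.prod_apply] using Finset.prod_pos fun i _ => hx i

end RootWeight

section AvecP

variable {n : ℕ}

lemma eLpNorm_inv_rootWeight_avg {w : ESp n → ℝ} (hw : ∀ᵐ x, 0 < w x) {p : ℝ} (hp : 1 ≤ p)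
    (Q : Cube n) :
    eLpNorm (rootWeight p w)⁻¹ (ENNReal.ofReal (1 - p⁻¹))⁻¹ Q.avg =
      if p = 1 then (essInf (fun x => ENNReal.ofReal (w x)) (volume.restrict Q.1))⁻¹
      else ((volume Q.1)⁻¹ *
        ∫⁻ x in Q.1, ENNReal.ofReal (w x) ^ (1 - p / (p - 1))) ^ (1 - p⁻¹) := by
  have hu : ∀ᵐ x ∂Q.avg, 0 < rootWeight p w x := Q.ae_avg (rootWeight_pos hw p)
  split_ifs with h
  · subst h
    simpa [rootWeight, Q.essInf_avg] using eLpNorm_top_inv hu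
  · have hp' : 1 < p := hp.lt_of_ne' h
    have ht : 0 < 1 - p⁻¹ := sub_pos.2 (inv_lt_one_of_one_lt₀ hp')
    rw [eLpNorm_inv_ofReal _ ht, ← Q.lintegral_avg]
    congr 1
    refine lintegral_congr_ae ?_
    filter_upwards [Q.ae_avg hw, hu,
      Q.ae_avg (rpow_one_sub_conjExponent_ae_eq (hw.mono fun _ => le_of_lt) hp')] with x hwx hux hx
    have hinv : 0 ≤ (rootWeight p w)⁻¹ x := inv_nonneg.2 hux.le
    rw [ENNReal.ofReal_rpow_of_pos hwx, hx, Real.enorm_of_nonneg hinv,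
      ENNReal.ofReal_rpow_of_nonneg hinv (inv_nonneg.2 ht.le)]

lemma eLpNorm_prod_rootWeight_avg {ι : Type*} [Fintype ι] {w : ι → ESp n → ℝ}
    (hw : ∀ i, ∀ᵐ x, 0 < w i x) (p : ι → ℝ) {s : ℝ} (hs : 0 < s) (Q : Cube n) :
    eLpNorm (∏ i, rootWeight (p i) (w i)) (ENNReal.ofReal s)⁻¹ Q.avg =
      ((volume Q.1)⁻¹ * ∫⁻ x in Q.1, ENNReal.ofReal (∏ i, w i x ^ (s⁻¹ / p i))) ^ s := by
  rw [eLpNorm_inv_ofReal _ hs, ← Q.lintegral_avg]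
  congr 1
  refine lintegral_congr_ae ?_
  filter_upwards [Q.ae_avg (prod_rootWeight_pos hw p),
    Q.ae_avg (prod_rpow_div_ae_eq (fun i => (hw i).mono fun _ => le_of_lt) p s⁻¹)] with x hpos hx
  rw [hx, Real.enorm_of_nonneg hpos.le,
    ENNReal.ofReal_rpow_of_nonneg hpos.le (inv_nonneg.2 hs.le)]

variable {m : ℕ}

lemma avecP_iff {p : Fin m → ℝ} (hp : ∀ i, 1 ≤ p i) (hs : 0 < ∑ i, (p i)⁻¹)
    {w : Fin m → ESp n → ℝ} (hw : ∀ i, ∀ᵐ x, 0 < w i x) :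
    AvecP p w ↔ IsUniformlyFinite fun Q : Cube n =>
      eLpNorm (∏ i, rootWeight (p i) (w i)) (ENNReal.ofReal (∑ i, (p i)⁻¹))⁻¹ Q.avg *
        ∏ i, eLpNorm (rootWeight (p i) (w i))⁻¹ (ENNReal.ofReal (1 - (p i)⁻¹))⁻¹ Q.avg := by
  simp only [AvecP, IsUniformlyFinite, eLpNorm_prod_rootWeight_avg hw p hs,
    eLpNorm_inv_rootWeight_avg (hw _) (hp _), Subtype.forall]

lemma isAp_and_isA1_iff {w : ESp n → ℝ} (hw : ∀ᵐ x, 0 < w x) {p : ℝ} (hp : 1 ≤ p) {k : ℝ}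
    (hk : 1 ≤ k) :
    ((1 < p → IsAp (fun x => w x ^ (1 - p / (p - 1))) (k * (p / (p - 1)))) ∧
        (p = 1 → IsA1 fun x => w x ^ k⁻¹)) ↔
      IsUniformlyFinite fun Q : Cube n =>
        eLpNorm (rootWeight p w)⁻¹ (ENNReal.ofReal (1 - p⁻¹))⁻¹ Q.avg *
          eLpNorm (rootWeight p w) (ENNReal.ofReal (k - (1 - p⁻¹)))⁻¹ Q.avg := by
  obtain rfl | hp := hp.eq_or_lt
  · have hk₀ : 0 < k := zero_lt_one.trans_le hk
    have h := isApGen_mul_inv_iff hw hk₀ le_rfl (Filter.EventuallyEq.refl _ _)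
    rw [mul_inv_cancel₀ hk₀.ne', IsApGen, if_pos rfl] at h
    have hroot : rootWeight 1 w = w := by ext x; simp [rootWeight]
    simpa [hroot, mul_comm] using h
  · have ht : 0 < 1 - p⁻¹ := sub_pos.2 (inv_lt_one_of_one_lt₀ hp)
    have htk : 1 - p⁻¹ < k := (sub_lt_self 1 (by positivity)).trans_le hk
    have hconj : p / (p - 1) = (1 - p⁻¹)⁻¹ := by
      have := (sub_pos.2 hp).ne'
      field_simp
    have hinv : ∀ᵐ x, 0 < (rootWeight p w)⁻¹ x :=
      (rootWeight_pos hw p).mono fun _ hx => inv_pos.2 hx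
    have hr : k * (1 - p⁻¹)⁻¹ ≠ 1 := by
      rw [← div_eq_mul_inv]
      exact ((one_lt_div ht).2 htk).ne'
    have h := isApGen_mul_inv_iff hinv ht htk.le
      (rpow_one_sub_conjExponent_ae_eq (hw.mono fun _ => le_of_lt) hp)
    rw [IsApGen, if_neg hr, ← hconj, inv_inv] at h
    simpa [hp, hp.ne'] using h

lemma isApGen_prod_iff {ι : Type*} [Fintype ι] {w : ι → ESp n → ℝ}
    (hw : ∀ i, ∀ᵐ x, 0 < w i x) (p : ι → ℝ) {s k : ℝ} (hs : 0 < s) (hsk : s ≤ k) :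
    IsApGen (fun x => ∏ i, w i x ^ (s⁻¹ / p i)) (k * s⁻¹) ↔
      IsUniformlyFinite fun Q : Cube n =>
        eLpNorm (∏ i, rootWeight (p i) (w i)) (ENNReal.ofReal s)⁻¹ Q.avg *
          eLpNorm (∏ i, rootWeight (p i) (w i))⁻¹ (ENNReal.ofReal (k - s))⁻¹ Q.avg :=
  isApGen_mul_inv_iff (prod_rootWeight_pos hw p) hs hsk
    (prod_rpow_div_ae_eq (fun i => (hw i).mono fun _ => le_of_lt) p s⁻¹)

end AvecP

theorem AvecP_characterization_general {n m : ℕ} (hm : 0 < m) (p : Fin m → ℝ)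
    (hp : ∀ i, 1 ≤ p i) (w : Fin m → ESp n → ℝ) (hw : ∀ i, AEMeasurable (w i))
    (hpos : ∀ i, ∀ᵐ x, 0 < w i x) :
    AvecP p w ↔
      ((∀ i, (1 < p i →
            IsAp (fun x => w i x ^ (1 - p i / (p i - 1))) ((m : ℝ) * (p i / (p i - 1)))) ∧
          (p i = 1 → IsA1 (fun x => w i x ^ ((m : ℝ)⁻¹)))) ∧
        IsApGen (fun x => ∏ i, w i x ^ ((∑ j, (p j)⁻¹)⁻¹ / p i))
          ((m : ℝ) * (∑ j, (p j)⁻¹)⁻¹)) := by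
  have hp₀ i : 0 < (p i)⁻¹ := inv_pos.2 (zero_lt_one.trans_le (hp i))
  have hp₁ i : (p i)⁻¹ ≤ 1 := inv_le_one_of_one_le₀ (hp i)
  have hs : 0 < ∑ i, (p i)⁻¹ := Finset.sum_pos (fun i _ => hp₀ i) ⟨⟨0, hm⟩, Finset.mem_univ _⟩
  have hsm : ∑ i, (p i)⁻¹ ≤ m := by
    simpa using Finset.sum_le_card_nsmul Finset.univ _ 1 fun i _ => hp₁ i
  rw [avecP_iff hp hs hpos, isUniformlyFinite_eLpNorm_prod_mul_prod_eLpNorm_inv_iff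
    (fun i Q => Q.aestronglyMeasurable_avg (aemeasurable_rootWeight (hw i) (p i)))
    (fun i Q => (Q.ae_avg (rootWeight_pos (hpos i) (p i))).mono fun _ => ne_of_gt)
    (by simp) (by simp)]
  simp only [isAp_and_isA1_iff (hpos _) (hp _) (Nat.one_le_cast.2 hm),
    isApGen_prod_iff hpos p hs hsm, inv_inv, sum_ofReal_one_sub hp₁,
    ofReal_sum_add_sum_erase_ofReal_one_sub (fun i => (hp₀ i).le) hp₁, Fintype.card_fin]

/-- **Characterization of the multilinear `A_{\vec P}` classes (Lerner et al.).**
`w⃗ ∈ A_{\vec P}` iff (i) for each `i` with `pᵢ > 1`, `wᵢ^{1-pᵢ'} ∈ A_{mpᵢ'}` and for each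
`i` with `pᵢ = 1`, `wᵢ^{1/m} ∈ A₁`; and (ii) `ν_{w⃗} = ∏ wᵢ^{p/pᵢ} ∈ A_{mp}`. -/
theorem AvecP_characterization {n m : ℕ} (hn : 0 < n) (hm : 0 < m)
    (p : Fin m → ℝ) (hp : ∀ i, 1 ≤ p i)
    (w : Fin m → ESp n → ℝ) (hw : ∀ i, IsWeight (w i)) :
    AvecP p w ↔
      ((∀ i, (1 < p i →
            IsAp (fun x => w i x ^ (1 - p i / (p i - 1))) ((m : ℝ) * (p i / (p i - 1)))) ∧
          (p i = 1 → IsA1 (fun x => w i x ^ ((m : ℝ)⁻¹)))) ∧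
        IsApGen (fun x => ∏ i, w i x ^ ((∑ j, (p j)⁻¹)⁻¹ / p i))
          ((m : ℝ) * (∑ j, (p j)⁻¹)⁻¹)) :=
  AvecP_characterization_general hm p hp w (fun i => (hw i).1.aemeasurable) fun i => (hw i).2.2.1

end
end

section
/- (Consequences of membership in A_{(1,…,1)}) Let w⃗=(w_1,…,w_m) be weights on ℝ^n with w⃗ ∈ A_{(1,…,1)}. Then ν_{w⃗} = w_1^{1/m}⋯w_m^{1/m} ∈ A_1, and w_i^{1/m} ∈ A_1 for every i=1,…,m. -/
open MeasureTheory ENNReal Set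

noncomputable section

/-!
Put `vᵢ = wᵢ^{1/m}`. Taking `m`-th roots turns `w⃗ ∈ A_{(1,…,1)}` into
`⨍_Q ∏ vᵢ ≤ C ∏ ess inf_Q vᵢ`. Since `∏ ess inf_Q vᵢ ≤ ess inf_Q ∏ vᵢ`, this gives `∏ vᵢ ∈ A₁`.
Bounding all but one factor of the integrand below by its essential infimum gives
`(⨍_Q vᵢ) ∏_{j ≠ i} ess inf_Q vⱼ ≤ C ∏ⱼ ess inf_Q vⱼ`. The product of essential infima is nonzero
because the left-hand side of the first inequality is, so the factors `j ≠ i` cancel.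
-/

section EssInf

variable {α ι : Type*} [MeasurableSpace α] {μ : Measure α}

lemma prod_essInf_le_essInf_prod (s : Finset ι) (g : ι → α → ℝ≥0∞) :
    ∏ i ∈ s, essInf (g i) μ ≤ essInf (fun x => ∏ i ∈ s, g i x) μ := by
  have hle : ∀ᵐ x ∂μ, ∀ i ∈ s, essInf (g i) μ ≤ g i x :=
    (ae_ball_iff s.countable_toSet).2 fun _ _ => ae_essInf_le
  refine le_essInf_of_ae_le _ ?_
  filter_upwards [hle] with x hx
  exact Finset.prod_le_prod' hx

lemma lintegral_mul_essInf_le (f g : α → ℝ≥0∞) :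
    (∫⁻ x, f x ∂μ) * essInf g μ ≤ ∫⁻ x, f x * g x ∂μ := by
  refine (lintegral_mul_const_le _ _).trans (lintegral_mono_ae ?_)
  filter_upwards [ae_essInf_le (f := g)] with x hx
  gcongr

lemma lintegral_mul_prod_erase_essInf_le [DecidableEq ι] {s : Finset ι} {i : ι} (hi : i ∈ s)
    (g : ι → α → ℝ≥0∞) :
    (∫⁻ x, g i x ∂μ) * ∏ j ∈ s.erase i, essInf (g j) μ ≤ ∫⁻ x, ∏ j ∈ s, g j x ∂μ :=
  calc (∫⁻ x, g i x ∂μ) * ∏ j ∈ s.erase i, essInf (g j) μ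
      ≤ (∫⁻ x, g i x ∂μ) * essInf (fun x => ∏ j ∈ s.erase i, g j x) μ := by
        gcongr; exact prod_essInf_le_essInf_prod _ g
    _ ≤ ∫⁻ x, g i x * ∏ j ∈ s.erase i, g j x ∂μ := lintegral_mul_essInf_le _ _
    _ = ∫⁻ x, ∏ j ∈ s, g j x ∂μ :=
        lintegral_congr fun x => Finset.mul_prod_erase s (fun j => g j x) hi

lemma essInf_rpow {r : ℝ} (hr : 0 < r) (g : α → ℝ≥0∞) :
    essInf (fun x => g x ^ r) μ = essInf g μ ^ r :=
  ((ENNReal.orderIsoRpow r hr).essInf_apply g μ).symm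

lemma essInf_ofReal_ne_top (hμ : μ ≠ 0) (f : α → ℝ) :
    essInf (fun x => ENNReal.ofReal (f x)) μ ≠ ⊤ := by
  have : (ae μ).NeBot := ae_neBot.2 hμ
  obtain ⟨x, hx⟩ := (ae_essInf_le (f := fun x => ENNReal.ofReal (f x)) (μ := μ)).exists
  exact ne_top_of_le_ne_top ENNReal.ofReal_ne_top hx

lemma lintegral_ofReal_ne_zero_of_ae_pos (hμ : μ ≠ 0) {f : α → ℝ} (hf : AEMeasurable f μ)
    (hpos : ∀ᵐ x ∂μ, 0 < f x) : ∫⁻ x, ENNReal.ofReal (f x) ∂μ ≠ 0 := by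
  have : (ae μ).NeBot := ae_neBot.2 hμ
  rw [Ne, lintegral_eq_zero_iff' hf.ennreal_ofReal]
  intro hzero
  obtain ⟨x, hx, hx_pos⟩ := (hzero.and hpos).exists
  exact (ENNReal.ofReal_pos.2 hx_pos).ne' hx

end EssInf

section OfReal

variable {ι : Type*}

lemma prod_ofReal_le_ofReal_prod (s : Finset ι) (f : ι → ℝ) :
    ∏ i ∈ s, ENNReal.ofReal (f i) ≤ ENNReal.ofReal (∏ i ∈ s, f i) := by
  by_cases hf : ∀ i ∈ s, 0 ≤ f i
  · exact (ENNReal.ofReal_prod_of_nonneg hf).ge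
  · push Not at hf
    obtain ⟨i, hi, hneg⟩ := hf
    rw [Finset.prod_eq_zero hi (ENNReal.ofReal_of_nonpos hneg.le)]
    exact zero_le

lemma ofReal_rpow_le_ofReal_rpow {r : ℝ} (hr : 0 < r) (a : ℝ) :
    ENNReal.ofReal a ^ r ≤ ENNReal.ofReal (a ^ r) := by
  rcases le_total 0 a with ha | ha
  · exact (ENNReal.ofReal_rpow_of_nonneg ha hr.le).le
  · simp [ENNReal.ofReal_of_nonpos ha, hr]

lemma le_rpow_inv_mul_prod_rpow_inv_s13 {s : Finset ι} {a C : ℝ≥0∞} {e : ι → ℝ≥0∞} {p : ℝ}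
    (hp : 0 < p) (hC : C ≠ ⊤) (he : ∀ i ∈ s, e i ≠ ⊤) (h : a ^ p * ∏ i ∈ s, (e i)⁻¹ ≤ C) :
    a ≤ C ^ p⁻¹ * ∏ i ∈ s, e i ^ p⁻¹ := by
  have h_inv : ∏ i ∈ s, (e i)⁻¹ = (∏ i ∈ s, e i)⁻¹ :=
    (ENNReal.prod_inv_distrib fun _ _ j hj _ => .inr (he j hj)).symm
  rw [h_inv, ← div_eq_mul_inv,
    ENNReal.div_le_iff_le_mul (.inr hC) (.inl (ENNReal.prod_ne_top he))] at h
  rwa [ENNReal.prod_rpow_of_nonneg (by positivity),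
    ← ENNReal.mul_rpow_of_nonneg _ _ (by positivity), ENNReal.le_rpow_inv_iff hp]

end OfReal

section Cube

variable {n : ℕ}

lemma volume_cube (c : Fin n → ℝ) (h : ℝ) :
    volume {x : ESp n | ∀ i, c i ≤ x i ∧ x i ≤ c i + h} = ENNReal.ofReal h ^ n := by
  have h_preimage : {x : ESp n | ∀ i, c i ≤ x i ∧ x i ≤ c i + h} =
      (WithLp.ofLp : ESp n → Fin n → ℝ) ⁻¹' Icc c (fun i => c i + h) :=
    Set.ext fun _ => forall_and
  rw [h_preimage, (PiLp.volume_preserving_ofLp (Fin n)).measure_preimage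
    measurableSet_Icc.nullMeasurableSet, Real.volume_Icc_pi]
  simp

variable {Q : Set (ESp n)}

lemma IsCube.volume_ne_zero (hQ : IsCube Q) : volume Q ≠ 0 := by
  obtain ⟨c, h, hh, rfl⟩ := hQ
  rw [volume_cube]
  exact pow_ne_zero n (ENNReal.ofReal_pos.2 hh).ne'

lemma IsCube.volume_ne_top (hQ : IsCube Q) : volume Q ≠ ⊤ := by
  obtain ⟨c, h, -, rfl⟩ := hQ
  rw [volume_cube]
  exact ENNReal.pow_ne_top ENNReal.ofReal_ne_top

lemma IsCube.restrict_ne_zero (hQ : IsCube Q) : volume.restrict Q ≠ 0 :=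
  Measure.restrict_eq_zero.not.2 hQ.volume_ne_zero

end Cube

section JointA1

variable {n : ℕ} {ι : Type*} [Fintype ι]

/-- The joint `A₁` condition on a finite family `v`: the average of `∏ vᵢ` over each cube is at most
a constant times the product of the essential infima of the `vᵢ`. The `m`-th roots of a vector
weight in `A_{(1,…,1)}` satisfy it. -/
def IsJointA1 (v : ι → ESp n → ℝ) : Prop :=
  ∃ C : ℝ≥0∞, C < ⊤ ∧ ∀ Q : Set (ESp n), IsCube Q →
    (volume Q)⁻¹ * wMeas (fun x => ∏ i, v i x) Q ≤
      C * ∏ i, essInf (fun x => ENNReal.ofReal (v i x)) (volume.restrict Q)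

lemma A11.isJointA1 {m : ℕ} (hm : 0 < m) {w : Fin m → ESp n → ℝ} (h : A11 w) :
    IsJointA1 (fun i x => w i x ^ (m : ℝ)⁻¹) := by
  obtain ⟨C, hC, hbound⟩ := h
  have hm_pos : (0 : ℝ) < m := Nat.cast_pos.2 hm
  have hr : (0 : ℝ) < (m : ℝ)⁻¹ := inv_pos.2 hm_pos
  refine ⟨C ^ (m : ℝ)⁻¹, ENNReal.rpow_lt_top_of_nonneg hr.le hC.ne, fun Q hQ => ?_⟩
  refine (le_rpow_inv_mul_prod_rpow_inv_s13 hm_pos hC.ne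
    (fun i _ => essInf_ofReal_ne_top hQ.restrict_ne_zero (w i)) (hbound Q hQ)).trans ?_
  gcongr with i
  rw [← essInf_rpow hr]
  exact essInf_mono_ae (.of_forall fun x => ofReal_rpow_le_ofReal_rpow hr (w i x))

variable {v : ι → ESp n → ℝ}

lemma IsJointA1.isA1_prod (h : IsJointA1 v) : IsA1 (fun x => ∏ i, v i x) := by
  obtain ⟨C, hC, hbound⟩ := h
  refine ⟨C, hC, fun Q hQ => (hbound Q hQ).trans ?_⟩
  gcongr
  exact (prod_essInf_le_essInf_prod _ _).trans
    (essInf_mono_ae (.of_forall fun x => prod_ofReal_le_ofReal_prod _ _))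

lemma average_prod_ne_zero (hmeas : ∀ i, AEMeasurable (v i)) (hpos : ∀ i, ∀ᵐ x, 0 < v i x)
    {Q : Set (ESp n)} (hQ : IsCube Q) : (volume Q)⁻¹ * wMeas (fun x => ∏ i, v i x) Q ≠ 0 := by
  refine mul_ne_zero (ENNReal.inv_ne_zero.2 hQ.volume_ne_top)
    (lintegral_ofReal_ne_zero_of_ae_pos hQ.restrict_ne_zero
      (Finset.aemeasurable_fun_prod _ fun i _ => (hmeas i).restrict) (ae_restrict_of_ae ?_))
  filter_upwards [ae_all_iff.2 hpos] with x hx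
  exact Finset.prod_pos fun i _ => hx i

lemma IsJointA1.isA1 (h : IsJointA1 v) (hmeas : ∀ i, AEMeasurable (v i))
    (hpos : ∀ i, ∀ᵐ x, 0 < v i x) (i : ι) : IsA1 (v i) := by
  classical
  obtain ⟨C, hC, hbound⟩ := h
  refine ⟨C, hC, fun Q hQ => ?_⟩
  let e : ι → ℝ≥0∞ := fun j => essInf (fun x => ENNReal.ofReal (v j x)) (volume.restrict Q)
  have he_zero : ∏ j, e j ≠ 0 := fun he =>
    average_prod_ne_zero hmeas hpos hQ (by simpa [e, he] using hbound Q hQ)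
  have hP_zero : ∏ j ∈ Finset.univ.erase i, e j ≠ 0 :=
    right_ne_zero_of_mul ((Finset.mul_prod_erase _ e (Finset.mem_univ i)).trans_ne he_zero)
  have hP_top : ∏ j ∈ Finset.univ.erase i, e j ≠ ⊤ :=
    ENNReal.prod_ne_top fun j _ => essInf_ofReal_ne_top hQ.restrict_ne_zero (v j)
  refine (ENNReal.mul_le_mul_iff_left hP_zero hP_top).1 ?_
  calc (volume Q)⁻¹ * wMeas (v i) Q * ∏ j ∈ Finset.univ.erase i, e j
      ≤ (volume Q)⁻¹ * ∫⁻ x in Q, ∏ j, ENNReal.ofReal (v j x) := by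
        rw [mul_assoc]
        gcongr
        exact lintegral_mul_prod_erase_essInf_le (Finset.mem_univ i) _
    _ ≤ (volume Q)⁻¹ * wMeas (fun x => ∏ j, v j x) Q := by
        gcongr
        exact lintegral_mono fun x => prod_ofReal_le_ofReal_prod _ _
    _ ≤ C * ∏ j, e j := hbound Q hQ
    _ = C * e i * ∏ j ∈ Finset.univ.erase i, e j := by
        rw [mul_assoc, Finset.mul_prod_erase _ e (Finset.mem_univ i)]

end JointA1

theorem A11_consequences_general {n m : ℕ} (hm : 0 < m) (w : Fin m → ESp n → ℝ)
    (hmeas : ∀ i, AEMeasurable (w i)) (hpos : ∀ i, ∀ᵐ x, 0 < w i x) (h : A11 w) :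
    IsA1 (fun x => ∏ i, w i x ^ ((m : ℝ)⁻¹)) ∧
      ∀ i, IsA1 (fun x => w i x ^ ((m : ℝ)⁻¹)) := by
  have h_joint := h.isJointA1 hm
  refine ⟨h_joint.isA1_prod, h_joint.isA1 (fun i => (hmeas i).pow_const _) fun i => ?_⟩
  filter_upwards [hpos i] with x hx
  exact Real.rpow_pos_of_pos hx _

/-- **Consequences of membership in `A_{(1,…,1)}`.**  If `w⃗ ∈ A_{(1,…,1)}` then
`ν_{w⃗} = ∏ wᵢ^{1/m} ∈ A₁` and `wᵢ^{1/m} ∈ A₁` for every `i`. -/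
theorem A11_consequences {n m : ℕ} (hn : 0 < n) (hm : 0 < m)
    (w : Fin m → ESp n → ℝ) (hw : ∀ i, IsWeight (w i)) (h : A11 w) :
    IsA1 (fun x => ∏ i, w i x ^ ((m : ℝ)⁻¹)) ∧
      ∀ i, IsA1 (fun x => w i x ^ ((m : ℝ)⁻¹)) :=
  A11_consequences_general hm w (fun i => (hw i).1.aemeasurable) (fun i => (hw i).2.2.1) h

end
end
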